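/- arXiv:math/9812057 — 2 statements merged into one kernel-verified Lean document; each statement's English description precedes it below -/
import Mathlib

section
/- Let p be an odd prime, r an integer whose residue class generates (ℤ/p²)ˣ, u a unit of ℤ_(p), and n ≥ 2 an integer. For an integer m, let Q_m be the quotient of the free ℤ_(p)-module on two generators x, y by the submodule generated by p^{n+p(p-1)}·y; p^n·x + u·p^{n-1}(p^{p(p-1)}-1)·y; (r^{n+p(p-1)} - r^m)·y; and (r^n - r^m)·x + (u/p)·r^n(r^{p(p-1)}-1)·y. Then Q_m = 0 if m is not congruent to n modulo p-1; and if m = n + (p-1)i for an integer i, then Q_m ≅ ℤ/p ⊕ ℤ/p^e, where e = 1 if ν_p(i) = 0; e = min(n, ν_p(i)+2) if ν_p(i-p) = 1; e = min(n+p(p-1), ν_p(i-p)+2) if ν_p(i-p) > 1 and n ≥ 3; and e = min(3+p(p-1), ν_p(i - p - p^{p(p-1)+1}) + 1) if ν_p(i-p) > 1 and n = 2. -/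
/-!
Everything happens over the discrete valuation ring `ℤ_(p)`. Put `g = r ^ (p - 1) = 1 + p * a`; as
`r` generates `(ℤ/p²)ˣ`, `a` is a unit. Lifting the exponent in the sharp form
`g ^ j - 1 = p * j * α j`, with `α j` a unit congruent to `a` modulo `p` (`ZLoc.exists_zpow_eq`),
controls every coefficient.

If `m` is not congruent to `n` modulo `p - 1`, then `r ^ n - r ^ m` and `r ^ (n + p(p-1)) - r ^ m`
are units and the relations generate everything (`ZLoc.subsingleton_quot`).

If `m = n + (p - 1) * i`, the last relation is `p * (a' * x + w * y)` with `w` a unit, and `p`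
divides all coefficients. Eliminating `y` from the other three relations leaves, up to units,
the multiples of `x` by
`p ^ (n + N) * i`, `p ^ (n - 1) * ((i - p) - p ^ N * i * (1 + p * z))`, `p * i * (i - p)`,
where `N = p * (p - 1)`; the second one uses `g ^ p = g ^ i * g ^ (p - i)`. Hence the quotient is
`ℤ/p ⊕ ℤ/p^e` with `p ^ e` the greatest common divisor of these numbers
(`ZLoc.nonempty_quot_equiv`), and that divisor is computed in `ZLoc.pow_dvd_iff_le`. For `n = 2` and
`p² ∣ i - p` the second number is `p * (i - p - p ^ (N + 1))` modulo `p ^ (N + 3)`, whence the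
exceptional form of the last case.
-/

set_option synthInstance.maxHeartbeats 1000000
set_option maxHeartbeats 1000000

noncomputable section

/-- The `p`-adic valuation of an integer, valued in `ℕ∞`, with `ν_p 0 = ⊤`. -/
def nuE (p : ℕ) (x : ℤ) : ℕ∞ :=
  if x = 0 then ⊤ else (padicValInt p x : ℕ∞)

/-- The localization `ℤ_(p)` of the integers at the prime `p`, realized as the subring
of `ℚ` consisting of fractions whose denominator is prime to `p`. -/
def ZLoc (p : ℕ) [hp : Fact p.Prime] : Subring ℚ where
  carrier := {q : ℚ | ¬ (p : ℕ) ∣ q.den}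
  zero_mem' := by simp [Rat.den_zero, Nat.dvd_one, hp.out.ne_one]
  one_mem' := by simp [Rat.den_one, Nat.dvd_one, hp.out.ne_one]
  add_mem' := by
    intro a b ha hb hd
    rcases (Nat.Prime.dvd_mul hp.out).mp (hd.trans (Rat.add_den_dvd a b)) with h | h
    · exact ha h
    · exact hb h
  mul_mem' := by
    intro a b ha hb hd
    rcases (Nat.Prime.dvd_mul hp.out).mp (hd.trans (Rat.mul_den_dvd a b)) with h | h
    · exact ha h
    · exact hb h
  neg_mem' := by
    intro a ha hd
    rw [Rat.neg_den] at hd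
    exact ha hd

/-- The free `ℤ_(p)`-module on two generators `x = ![1,0]`, `y = ![0,1]`,
realized as a lattice in `ℚ²`. -/
def latt2 (p : ℕ) [Fact p.Prime] : Submodule (ZLoc p) (Fin 2 → ℚ) :=
  Submodule.span (ZLoc p) {![1, 0], ![0, 1]}

/-- The quotient of the free `ℤ_(p)`-module on two generators by the submodule
generated by the relations in `s`. -/
abbrev QuotMod2 (p : ℕ) [Fact p.Prime] (s : Set (Fin 2 → ℚ)) : Type :=
  ↥(latt2 p) ⧸ Submodule.comap (latt2 p).subtype (Submodule.span (ZLoc p) s)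


/-! ### Arithmetic of `ℤ_(p)` -/

namespace ZLoc

variable {p : ℕ} [Fact p.Prime]

lemma mem_iff_norm (q : ℚ) : q ∈ ZLoc p ↔ ‖(q : ℚ_[p])‖ ≤ 1 := by
  rw [Padic.norm_rat_le_one_iff_padicValuation_le_one, Rat.padicValuation_le_one_iff]
  rfl

/-- The inclusion of `ℤ_(p)` into the `p`-adic integers. -/
def toPadicInt (p : ℕ) [Fact p.Prime] : ZLoc p →+* ℤ_[p] where
  toFun q := ⟨((q : ℚ) : ℚ_[p]), (mem_iff_norm _).1 q.2⟩
  map_zero' := by apply Subtype.ext; simp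
  map_one' := by apply Subtype.ext; simp
  map_add' _ _ := by apply Subtype.ext; simp; rfl
  map_mul' _ _ := by apply Subtype.ext; simp; rfl

/-- Reduction modulo `p ^ k`. -/
def red (p : ℕ) [Fact p.Prime] (k : ℕ) : ZLoc p →+* ZMod (p ^ k) :=
  (PadicInt.toZModPow k).comp (toPadicInt p)

lemma pow_dvd_iff_norm (k : ℕ) (q : ZLoc p) :
    (p : ZLoc p) ^ k ∣ q ↔ ‖((q : ℚ) : ℚ_[p])‖ ≤ (p : ℝ) ^ (-k : ℤ) := by
  have hp0 : (0 : ℝ) < p := by exact_mod_cast (Fact.out : p.Prime).pos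
  have hpq : (p : ℚ) ≠ 0 := by exact_mod_cast (Fact.out : p.Prime).ne_zero
  constructor
  · rintro ⟨c, rfl⟩
    have hc := (mem_iff_norm (p := p) (c : ℚ)).1 c.2
    push_cast
    rw [norm_mul, norm_pow, Padic.norm_p, zpow_neg, zpow_natCast, inv_pow]
    have : (0 : ℝ) ≤ ((p : ℝ) ^ k)⁻¹ := by positivity
    nlinarith
  · intro h
    refine ⟨⟨(q : ℚ) / p ^ k, ?_⟩, ?_⟩
    · rw [mem_iff_norm]
      push_cast
      rw [norm_div, norm_pow, Padic.norm_p, div_le_one (by positivity), inv_pow]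
      simpa using h
    · ext
      push_cast
      field_simp

lemma red_eq_zero_iff (k : ℕ) (q : ZLoc p) : red p k q = 0 ↔ (p : ZLoc p) ^ k ∣ q := by
  rw [pow_dvd_iff_norm, red, RingHom.comp_apply, ← RingHom.mem_ker, PadicInt.ker_toZModPow,
    ← PadicInt.norm_le_pow_iff_mem_span_pow]
  rfl

lemma isUnit_of_not_dvd {q : ZLoc p} (h : ¬ (p : ZLoc p) ∣ q) : IsUnit q := by
  have h1 : ‖toPadicInt p q‖ = 1 := by
    by_contra hne
    have hlt : ‖toPadicInt p q‖ < 1 := lt_of_le_of_ne (PadicInt.norm_le_one _) hne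
    apply h
    have := (pow_dvd_iff_norm 1 q).2
    rw [pow_one] at this
    apply this
    rw [PadicInt.norm_lt_one_iff_dvd, ← pow_one (p : ℤ_[p]), ← Ideal.mem_span_singleton,
      ← PadicInt.norm_le_pow_iff_mem_span_pow] at hlt
    exact hlt
  have h2 : ‖((q : ℚ) : ℚ_[p])‖ = 1 := h1
  have h3 : (q : ℚ) ≠ 0 := by
    intro h0
    rw [h0] at h2
    simp at h2
  refine IsUnit.of_mul_eq_one ⟨(q : ℚ)⁻¹, ?_⟩ ?_
  · rw [mem_iff_norm]
    push_cast
    rw [norm_inv, h2, inv_one]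
  · ext
    push_cast
    exact mul_inv_cancel₀ h3

lemma not_isUnit_p : ¬ IsUnit (p : ZLoc p) := by
  intro h
  have h1 : (p : ZLoc p) ^ 1 ∣ 1 := by simpa using h.dvd
  rw [← red_eq_zero_iff, map_one] at h1
  have : Fact (1 < p ^ 1) := ⟨by simpa using (Fact.out : p.Prime).one_lt⟩
  exact one_ne_zero h1

lemma isUnit_iff {q : ZLoc p} : IsUnit q ↔ ¬ (p : ZLoc p) ∣ q :=
  ⟨fun h hd => not_isUnit_p (isUnit_of_dvd_unit hd h), isUnit_of_not_dvd⟩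

lemma isUnit_add_p_mul {q : ZLoc p} (h : IsUnit q) (z : ZLoc p) : IsUnit (q + p * z) := by
  rw [isUnit_iff] at h ⊢
  rwa [dvd_add_left (dvd_mul_right _ _)]

lemma p_ne_zero : (p : ZLoc p) ≠ 0 := by
  have := (Fact.out : p.Prime).ne_zero
  exact_mod_cast this

lemma pow_dvd_intCast (k : ℕ) (z : ℤ) : (p : ZLoc p) ^ k ∣ (z : ZLoc p) ↔ (p : ℤ) ^ k ∣ z := by
  rw [pow_dvd_iff_norm, ← Padic.norm_int_le_pow_iff_dvd]
  simp

lemma isUnit_intCast {z : ℤ} : IsUnit (z : ZLoc p) ↔ ¬ (p : ℤ) ∣ z := by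
  have := pow_dvd_intCast (p := p) 1 z
  rw [pow_one, pow_one] at this
  rw [isUnit_iff, this]

lemma pow_dvd_pow_iff (k l : ℕ) : (p : ZLoc p) ^ k ∣ (p : ZLoc p) ^ l ↔ k ≤ l :=
  _root_.pow_dvd_pow_iff p_ne_zero not_isUnit_p

end ZLoc

lemma le_nuE_iff (p : ℕ) [Fact p.Prime] (k : ℕ) (z : ℤ) :
    (k : ℕ∞) ≤ nuE p z ↔ (p : ℤ) ^ k ∣ z := by
  rw [padicValInt_dvd_iff, nuE]
  split_ifs with h
  · simp [h]
  · simp [h]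

/-! ### Powers of `r` -/

namespace ZLoc

variable {p : ℕ} [Fact p.Prime]

/-- The geometric sum `1 + h + ⋯ + h ^ (p - 1)` with `h ≡ 1` modulo `p` is `p` modulo `p ^ 2`,
because `p` is odd. -/
lemma exists_pow_prime_sub_one (hodd : Odd p) (t : ZLoc p) :
    ∃ z : ZLoc p, (1 + p * t) ^ p - 1 = p * t * (p * (1 + p * z)) := by
  obtain ⟨z, hz⟩ := odd_sq_dvd_geom_sum₂_sub (1 : ZLoc p) t hodd
  simp only [one_pow, mul_one] at hz
  refine ⟨z, ?_⟩
  rw [← geom_sum_mul, sub_eq_iff_eq_add.1 hz]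
  ring

lemma exists_pow_prime_pow (hodd : Odd p) (a : ZLoc p) (k : ℕ) :
    ∃ b : ZLoc p, (1 + p * a) ^ (p ^ k) = 1 + p ^ (k + 1) * (a + p * b) := by
  induction k with
  | zero => exact ⟨0, by simp⟩
  | succ k ih =>
    obtain ⟨b, hb⟩ := ih
    obtain ⟨z, hz⟩ := exists_pow_prime_sub_one hodd ((p : ZLoc p) ^ k * (a + p * b))
    refine ⟨b + z * (a + (p : ZLoc p) * b), ?_⟩
    rw [pow_succ p k, pow_mul, hb,
      show (1 + (p : ZLoc p) ^ (k + 1) * (a + p * b)) = 1 + p * (p ^ k * (a + p * b)) by ring,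
      sub_eq_iff_eq_add.1 hz]
    ring

lemma exists_one_add_pow (t : ZLoc p) (s : ℕ) :
    ∃ z : ZLoc p, (1 + t) ^ s = 1 + t * s + t ^ 2 * z := by
  induction s with
  | zero => exact ⟨0, by simp⟩
  | succ s ih =>
    obtain ⟨z, hz⟩ := ih
    refine ⟨s + z + t * z, ?_⟩
    rw [pow_succ, hz]
    push_cast
    ring

lemma exists_natPow_eq (hodd : Odd p) (a : ZLoc p) (j : ℕ) :
    ∃ b : ZLoc p, (1 + p * a) ^ j = 1 + p * j * (a + p * b) := by
  rcases eq_or_ne j 0 with rfl | hj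
  · exact ⟨0, by simp⟩
  obtain ⟨k, s, hs, rfl⟩ := Nat.exists_eq_pow_mul_and_not_dvd hj p (Fact.out : p.Prime).ne_one
  obtain ⟨b, hb⟩ := exists_pow_prime_pow hodd a k
  obtain ⟨z, hz⟩ := exists_one_add_pow ((p : ZLoc p) ^ (k + 1) * (a + (p : ZLoc p) * b)) s
  have hsu : IsUnit (s : ZLoc p) := by
    have := isUnit_intCast (p := p) (z := (s : ℤ))
    rw [Int.cast_natCast] at this
    exact this.2 (by exact_mod_cast hs)
  obtain ⟨c, hc⟩ := hsu.exists_right_inv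
  refine ⟨b + (p : ZLoc p) ^ k * (a + (p : ZLoc p) * b) ^ 2 * z * c, ?_⟩
  rw [pow_mul, hb, hz]
  push_cast
  linear_combination -(p : ZLoc p) ^ (2 * k + 2) * (a + p * b) ^ 2 * z * hc

/-- The refined form of lifting the exponent: `g ^ j - 1` equals `p * j` times an element
congruent to `a = (g - 1) / p` modulo `p`. -/
lemma exists_zpow_eq (hodd : Odd p) (a : ZLoc p) (g : (ZLoc p)ˣ) (hg : (g : ZLoc p) = 1 + p * a)
    (j : ℤ) : ∃ b : ZLoc p, ((g ^ j : (ZLoc p)ˣ) : ZLoc p) = 1 + p * j * (a + p * b) := by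
  obtain ⟨k, rfl | rfl⟩ := j.eq_nat_or_neg
  · obtain ⟨b, hb⟩ := exists_natPow_eq hodd a k
    exact ⟨b, by simp [hg, hb]⟩
  · obtain ⟨b, hb⟩ := exists_natPow_eq hodd a k
    rw [← hg, ← Units.val_pow_eq_pow_val] at hb
    have hX := (g ^ k).mul_inv
    rw [zpow_neg, zpow_natCast]
    generalize (((g ^ k)⁻¹ : (ZLoc p)ˣ) : ZLoc p) = Y at *
    rw [hb] at hX
    refine ⟨b - (a + (p : ZLoc p) * b) * ((k : ZLoc p) * (a + (p : ZLoc p) * b) * Y), ?_⟩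
    push_cast
    linear_combination (1 - (p : ZLoc p) * k * (a + p * b)) * hX

/-- The consequences of `r` generating `(ℤ/p²)ˣ`: it is a unit of `ℤ_(p)`, `(r ^ (p - 1) - 1) / p`
is a unit as well, and `r` has order `p - 1` modulo `p`. -/
lemma generator_facts (hodd : Odd p) (r : ℤ)
    (hr : ∀ v : (ZMod (p ^ 2))ˣ, ∃ j : ℕ, (v : ZMod (p ^ 2)) = (r : ZMod (p ^ 2)) ^ j) :
    ∃ (R : (ZLoc p)ˣ) (a : ZLoc p), (R : ZLoc p) = r ∧ IsUnit a ∧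
      (R : ZLoc p) ^ (p - 1) = 1 + p * a ∧
      ∀ j : ℤ, ¬ ((p : ℤ) - 1 ∣ j) → IsUnit (((R ^ j : (ZLoc p)ˣ) : ZLoc p) - 1) := by
  have hp : p.Prime := Fact.out
  have hp3 : 3 ≤ p := by
    obtain ⟨k, hk⟩ := hodd
    have := hp.two_le
    omega
  have hp2 : Fact (2 < p ^ 2) := ⟨by nlinarith⟩
  have hunit : IsUnit (r : ZMod (p ^ 2)) := by
    obtain ⟨j, hj⟩ := hr (-1)
    have hj0 : j ≠ 0 := by
      rintro rfl
      rw [pow_zero, Units.val_neg, Units.val_one] at hj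
      exact ZMod.neg_one_ne_one hj
    rw [← isUnit_pow_iff hj0, ← hj]
    exact Units.isUnit _
  obtain ⟨ρ, hρ⟩ := hunit
  have hgen : ∀ v : (ZMod (p ^ 2))ˣ, v ∈ Subgroup.zpowers ρ := by
    intro v
    obtain ⟨j, hj⟩ := hr v
    exact ⟨j, by ext; simp [hj, hρ]⟩
  have hord : orderOf ρ = p * (p - 1) := by
    rw [orderOf_eq_card_of_forall_mem_zpowers hgen, Nat.card_eq_fintype_card,
      ZMod.card_units_eq_totient, Nat.totient_prime_pow hp (by norm_num)]
    simp
  have hdvd : p ^ 1 ∣ p ^ 2 := pow_dvd_pow p (by norm_num)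
  have hp1 : Fact (1 < p ^ 1) := ⟨by rw [pow_one]; omega⟩
  have hrho1 : ((ZMod.unitsMap hdvd ρ : (ZMod (p ^ 1))ˣ) : ZMod (p ^ 1)) = r := by
    simp [ZMod.unitsMap_def, hρ]
  have hord1 : orderOf (ZMod.unitsMap hdvd ρ) = p - 1 := by
    have : ∀ v : (ZMod (p ^ 1))ˣ, v ∈ Subgroup.zpowers (ZMod.unitsMap hdvd ρ) := by
      intro v
      have : NeZero (p ^ 2) := ⟨by positivity⟩
      obtain ⟨w, rfl⟩ := ZMod.unitsMap_surjective hdvd v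
      obtain ⟨j, rfl⟩ := hgen w
      exact ⟨j, by simp⟩
    rw [orderOf_eq_card_of_forall_mem_zpowers this, Nat.card_eq_fintype_card,
      ZMod.card_units_eq_totient, pow_one, Nat.totient_prime hp]
  have hcast : ∀ k (z : ℤ), red p k (z : ZLoc p) = z := fun k z => map_intCast _ _
  have hrU : IsUnit (r : ZLoc p) := by
    rw [isUnit_iff, ← pow_one (p : ZLoc p), ← red_eq_zero_iff, hcast, ← hrho1]
    exact Units.ne_zero _
  obtain ⟨R, hR⟩ := hrU
  have hred1 : Units.map (red p 1 : ZLoc p →* ZMod (p ^ 1)) R = ZMod.unitsMap hdvd ρ := by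
    ext
    rw [hrho1, Units.coe_map, hR]
    exact hcast 1 r
  have hkey : ∀ j : ℤ, (p : ZLoc p) ∣ ((R ^ j : (ZLoc p)ˣ) : ZLoc p) - 1 → (p : ℤ) - 1 ∣ j := by
    intro j hj
    rw [← pow_one (p : ZLoc p), ← red_eq_zero_iff, map_sub, map_one, sub_eq_zero] at hj
    have h1 : (ZMod.unitsMap hdvd ρ) ^ j = 1 := by
      rw [← hred1, ← map_zpow]
      ext
      exact hj
    rw [← orderOf_dvd_iff_zpow_eq_one, hord1] at h1
    rwa [Nat.cast_sub hp.one_le, Nat.cast_one] at h1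
  have hdiv : (p : ZLoc p) ∣ (R : ZLoc p) ^ (p - 1) - 1 := by
    rw [← pow_one (p : ZLoc p), ← red_eq_zero_iff, map_sub, map_one, sub_eq_zero]
    have h1 : (ZMod.unitsMap hdvd ρ) ^ (p - 1) = 1 := by
      rw [← hord1, pow_orderOf_eq_one]
    rw [← hred1, ← map_pow] at h1
    exact congrArg Units.val h1
  obtain ⟨a, ha⟩ := hdiv
  refine ⟨R, a, hR, ?_, ?_, ?_⟩
  · rw [isUnit_iff]
    rintro ⟨b, rfl⟩
    have h2 : (p : ZLoc p) ^ 2 ∣ (r : ZLoc p) ^ (p - 1) - 1 := ⟨b, by rw [← hR, ha]; ring⟩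
    rw [← red_eq_zero_iff, map_sub, map_one, sub_eq_zero, map_pow, hcast, ← hρ] at h2
    have h3 : ρ ^ (p - 1) = 1 := by
      ext
      simpa using h2
    have h4 := Nat.le_of_dvd (by omega) (orderOf_dvd_of_pow_eq_one h3)
    rw [hord] at h4
    have : 0 < p - 1 := by omega
    nlinarith
  · rw [← ha]
    ring
  · intro j hj
    rw [isUnit_iff]
    exact fun h => hj (hkey j h)

end ZLoc

/-! ### Presentations with two generators -/

namespace ZLoc

variable {p : ℕ} [Fact p.Prime]

lemma mem_latt2_iff (v : Fin 2 → ℚ) :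
    v ∈ latt2 p ↔ ∃ s t : ZLoc p, v = ![(s : ℚ), (t : ℚ)] := by
  rw [latt2, Submodule.mem_span_pair]
  constructor
  · rintro ⟨s, t, rfl⟩
    refine ⟨s, t, ?_⟩
    ext i
    fin_cases i <;> simp [Subring.smul_def]
  · rintro ⟨s, t, rfl⟩
    refine ⟨s, t, ?_⟩
    ext i
    fin_cases i <;> simp [Subring.smul_def]

/-- The coordinates of a vector of the lattice, as elements of `ℤ_(p)`. -/
def coord (i : Fin 2) : latt2 p →+ ZLoc p where
  toFun v := ⟨v.1 i, by
    obtain ⟨s, t, h⟩ := (mem_latt2_iff v.1).1 v.2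
    rw [h]
    fin_cases i
    · exact s.2
    · exact t.2⟩
  map_zero' := rfl
  map_add' _ _ := rfl

/-- If the relations are `D = (p * a', p * w)` with `w` a unit, together with vectors
`t • D + (ρ, 0)` for three pairs `(t, ρ)`, and the three `ρ` have greatest common divisor `p ^ e`,
then in the basis `x`, `a' * x + w * y` the relation module is generated by `p ^ e` times the first
vector and `p` times the second one. -/
lemma nonempty_quot_equiv (a' t₁ t₂ t₃ ρ₁ ρ₂ ρ₃ : ZLoc p) (w : (ZLoc p)ˣ) (e : ℕ)
    (he : ∀ k : ℕ, ((p : ZLoc p) ^ k ∣ ρ₁ ∧ (p : ZLoc p) ^ k ∣ ρ₂ ∧ (p : ZLoc p) ^ k ∣ ρ₃) ↔ k ≤ e)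
    (A B C D : Fin 2 → ℚ)
    (hA : A = ![((t₁ * (p * a') + ρ₁ : ZLoc p) : ℚ), ((t₁ * (p * w) : ZLoc p) : ℚ)])
    (hB : B = ![((t₂ * (p * a') + ρ₂ : ZLoc p) : ℚ), ((t₂ * (p * w) : ZLoc p) : ℚ)])
    (hC : C = ![((t₃ * (p * a') + ρ₃ : ZLoc p) : ℚ), ((t₃ * (p * w) : ZLoc p) : ℚ)])
    (hD : D = ![((p * a' : ZLoc p) : ℚ), ((p * w : ZLoc p) : ℚ)]) :
    Nonempty (QuotMod2 p {A, B, C, D} ≃+ (ZMod p × ZMod (p ^ e))) := by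
  -- Membership in the relation module, in the basis `x`, `a' * x + w * y`.
  have hspan : ∀ s t : ZLoc p, ![(s : ℚ), (t : ℚ)] ∈ Submodule.span (ZLoc p) {A, B, C, D} ↔
      (p : ZLoc p) ^ 1 ∣ (w⁻¹ : (ZLoc p)ˣ) * t ∧
        (p : ZLoc p) ^ e ∣ s - (w⁻¹ : (ZLoc p)ˣ) * t * a' := by
    have hw := w.mul_inv
    have hw' := w.inv_mul
    obtain ⟨⟨σ₁, h₁⟩, ⟨σ₂, h₂⟩, ⟨σ₃, h₃⟩⟩ := (he e).2 le_rfl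
    intro s t
    constructor
    · intro h
      simp only [Submodule.mem_span_insert, Submodule.mem_span_singleton] at h
      obtain ⟨α, _, ⟨β, _, ⟨γ, _, ⟨δ, rfl⟩, rfl⟩, rfl⟩, h⟩ := h
      have hs : s = (α * t₁ + β * t₂ + γ * t₃ + δ) * (p * a') + p ^ e *
          (α * σ₁ + β * σ₂ + γ * σ₃) := by
        have := congrFun h 0
        simp [hA, hB, hC, hD, Subring.smul_def, h₁, h₂, h₃] at this
        ext
        push_cast
        rw [this]
        ring
      have ht : t = (α * t₁ + β * t₂ + γ * t₃ + δ) * (p * w) := by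
        have := congrFun h 1
        simp [hA, hB, hC, hD, Subring.smul_def, h₁, h₂, h₃] at this
        ext
        push_cast
        rw [this]
        ring
      refine ⟨⟨α * t₁ + β * t₂ + γ * t₃ + δ, ?_⟩, ⟨α * σ₁ + β * σ₂ + γ * σ₃, ?_⟩⟩
      · rw [ht]
        linear_combination ((α * t₁ + β * t₂ + γ * t₃ + δ) * p) * hw'
      · rw [hs, ht]
        linear_combination -((α * t₁ + β * t₂ + γ * t₃ + δ) * p) * a' * hw'
    · rintro ⟨⟨τ, hτ⟩, ⟨σ, hσ⟩⟩
      have hx : ![((p ^ e : ZLoc p) : ℚ), 0] ∈ Submodule.span (ZLoc p) {A, B, C, D} := by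
        have hDm : D ∈ Submodule.span (ZLoc p) {A, B, C, D} :=
          Submodule.subset_span (by simp)
        have aux : ∀ (G : Fin 2 → ℚ) (t ρ ς : ZLoc p),
            G ∈ Submodule.span (ZLoc p) {A, B, C, D} →
            G = ![((t * (p * a') + ρ : ZLoc p) : ℚ), ((t * (p * w) : ZLoc p) : ℚ)] →
            ρ = p ^ e * ς → ¬ (p : ZLoc p) ^ (e + 1) ∣ ρ →
            ![((p ^ e : ZLoc p) : ℚ), 0] ∈ Submodule.span (ZLoc p) {A, B, C, D} := by
          intro G t ρ ς hG hGe hρ hnd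
          have hς : IsUnit ς := by
            rw [isUnit_iff]
            rintro ⟨κ, rfl⟩
            exact hnd ⟨κ, by rw [hρ]; ring⟩
          obtain ⟨ι, hι⟩ := hς.exists_right_inv
          have hι' : (ς : ℚ) * ι = 1 := by exact_mod_cast congrArg Subtype.val hι
          have := Submodule.smul_mem _ ι (Submodule.sub_mem _ hG (Submodule.smul_mem _ t hDm))
          convert this using 1
          ext i
          fin_cases i
          · simp [hGe, hD, Subring.smul_def, hρ]
            linear_combination -(p : ℚ) ^ e * hι'
          · simp [hGe, hD, Subring.smul_def, hρ]
        have hne : ¬ ((p : ZLoc p) ^ (e + 1) ∣ ρ₁ ∧ (p : ZLoc p) ^ (e + 1) ∣ ρ₂ ∧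
            (p : ZLoc p) ^ (e + 1) ∣ ρ₃) := by
          rw [he]
          omega
        by_cases c₁ : (p : ZLoc p) ^ (e + 1) ∣ ρ₁
        · by_cases c₂ : (p : ZLoc p) ^ (e + 1) ∣ ρ₂
          · exact aux C t₃ ρ₃ σ₃ (Submodule.subset_span (by simp)) hC h₃ (by tauto)
          · exact aux B t₂ ρ₂ σ₂ (Submodule.subset_span (by simp)) hB h₂ c₂
        · exact aux A t₁ ρ₁ σ₁ (Submodule.subset_span (by simp)) hA h₁ c₁
      have hDm : D ∈ Submodule.span (ZLoc p) {A, B, C, D} := Submodule.subset_span (by simp)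
      have := Submodule.add_mem _ (Submodule.smul_mem _ τ hDm) (Submodule.smul_mem _ σ hx)
      convert this using 1
      have ht : t = τ * (p * w) := by
        linear_combination (w : ZLoc p) * hτ - t * hw
      have hs : s = τ * (p * a') + σ * p ^ e := by
        linear_combination hσ + a' * hτ
      ext i
      fin_cases i
      · simp [hD, Subring.smul_def, hs]
      · simp [hD, Subring.smul_def, ht]
  let f : latt2 p →+ ZMod (p ^ 1) × ZMod (p ^ e) :=
    AddMonoidHom.prod
      (((red p 1).toAddMonoidHom.comp (AddMonoidHom.mulLeft ((w⁻¹ : (ZLoc p)ˣ) : ZLoc p))).comp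
        (coord 1))
      ((red p e).toAddMonoidHom.comp (coord 0 -
        (AddMonoidHom.mulRight a').comp ((AddMonoidHom.mulLeft ((w⁻¹ : (ZLoc p)ˣ) : ZLoc p)).comp
        (coord 1))))
  have hf : ∀ v, f v = (red p 1 ((w⁻¹ : (ZLoc p)ˣ) * coord 1 v),
      red p e (coord 0 v - (w⁻¹ : (ZLoc p)ˣ) * coord 1 v * a')) := fun v => rfl
  have hker : ∀ v, f v = 0 ↔ v ∈ Submodule.comap (latt2 p).subtype
      (Submodule.span (ZLoc p) {A, B, C, D}) := by
    intro v
    have hv : v.1 = ![((coord 0 v : ZLoc p) : ℚ), ((coord 1 v : ZLoc p) : ℚ)] := by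
      ext i
      fin_cases i <;> rfl
    rw [hf, Prod.mk_eq_zero, red_eq_zero_iff, red_eq_zero_iff, ← hspan, ← hv]
    rfl
  have hsurj : Function.Surjective f := by
    rintro ⟨b, c⟩
    obtain ⟨b, rfl⟩ := ZMod.intCast_surjective b
    obtain ⟨c, rfl⟩ := ZMod.intCast_surjective c
    let v : latt2 p := ⟨![((c + b * a' : ZLoc p) : ℚ), ((w * b : ZLoc p) : ℚ)],
      (mem_latt2_iff _).2 ⟨_, _, rfl⟩⟩
    have h0 : coord 0 v = c + b * a' := rfl
    have h1 : coord 1 v = w * b := rfl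
    refine ⟨v, ?_⟩
    rw [hf, h0, h1, Units.inv_mul_cancel_left, add_sub_cancel_right, map_intCast, map_intCast]
  let N := Submodule.comap (latt2 p).subtype (Submodule.span (ZLoc p) {A, B, C, D})
  let F : (latt2 p ⧸ N) →+ ZMod (p ^ 1) × ZMod (p ^ e) :=
    QuotientAddGroup.lift N.toAddSubgroup f (fun v hv => (hker v).2 hv)
  have hF : ∀ v, F (Submodule.Quotient.mk v) = f v := fun v => rfl
  have hbij : Function.Bijective F := by
    constructor
    · rw [injective_iff_map_eq_zero]
      intro q hq
      obtain ⟨v, rfl⟩ := Submodule.Quotient.mk_surjective N q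
      rw [hF, hker] at hq
      exact (Submodule.Quotient.mk_eq_zero N).2 hq
    · intro x
      obtain ⟨v, hv⟩ := hsurj x
      exact ⟨Submodule.Quotient.mk v, by rw [hF, hv]⟩
  have E := AddEquiv.ofBijective F hbij
  rw [pow_one] at E
  exact ⟨E⟩

/-- The relation module is everything when the first coordinate of the last relation and the
second coordinate of a relation `(0, c)` are units. -/
lemma subsingleton_quot (A B C D : Fin 2 → ℚ) (c d₁ d₂ : ZLoc p) (hc : IsUnit c) (hd : IsUnit d₁)
    (hC : C = ![0, (c : ℚ)]) (hD : D = ![(d₁ : ℚ), (d₂ : ℚ)]) :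
    Subsingleton (QuotMod2 p {A, B, C, D}) := by
  rw [QuotMod2, Submodule.Quotient.subsingleton_iff, Submodule.comap_subtype_eq_top]
  intro v hv
  obtain ⟨s, t, rfl⟩ := (mem_latt2_iff v).1 hv
  obtain ⟨c', hc'⟩ := hc.exists_right_inv
  obtain ⟨d', hd'⟩ := hd.exists_right_inv
  have hCm : C ∈ Submodule.span (ZLoc p) {A, B, C, D} := Submodule.subset_span (by simp)
  have hDm : D ∈ Submodule.span (ZLoc p) {A, B, C, D} := Submodule.subset_span (by simp)
  have := Submodule.add_mem _ (Submodule.smul_mem _ (s * d') hDm)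
    (Submodule.smul_mem _ ((t - s * d' * d₂) * c') hCm)
  convert this using 1
  have hc'' : (c : ℚ) * c' = 1 := by exact_mod_cast congrArg Subtype.val hc'
  have hd'' : (d₁ : ℚ) * d' = 1 := by exact_mod_cast congrArg Subtype.val hd'
  ext i
  fin_cases i
  · simp [hC, hD, Subring.smul_def]
    linear_combination -(s : ℚ) * hd''
  · simp [hC, hD, Subring.smul_def]
    linear_combination -((t : ℚ) - s * d' * d₂) * hc''

end ZLoc

/-! ### The exponent `e` -/

namespace ZLoc

variable {p : ℕ} [Fact p.Prime]

lemma le_nuE_add_iff (k c : ℕ) (z : ℤ) :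
    (k : ℕ∞) ≤ nuE p z + c ↔ (p : ZLoc p) ^ k ∣ (p : ZLoc p) ^ c * z := by
  rcases le_total k c with h | h
  · refine ⟨fun _ => (pow_dvd_pow _ h).mul_right _, fun _ => ?_⟩
    exact (Nat.cast_le.2 h).trans le_add_self
  · obtain ⟨d, rfl⟩ := Nat.exists_eq_add_of_le h
    rw [pow_add, mul_dvd_mul_iff_left (pow_ne_zero _ p_ne_zero), pow_dvd_intCast, ← le_nuE_iff,
      Nat.cast_add, add_comm (c : ℕ∞), ENat.add_le_add_iff_right (ENat.natCast_ne_top c)]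

/-- The greatest common divisor of the three numbers that remain after eliminating with the fourth
relation; the four cases for `e` arise here. -/
lemma pow_dvd_iff_le (l N : ℕ) (hN : 1 ≤ N) (i : ℤ) (z : ZLoc p) (e : ℕ)
    (h1 : nuE p i = 0 → e = 1)
    (h2 : nuE p (i - p) = 1 → (e : ℕ∞) = min ((l + 2 : ℕ) : ℕ∞) (nuE p i + 2))
    (h3 : 1 < nuE p (i - p) → 3 ≤ l + 2 →
      (e : ℕ∞) = min ((l + 2 + N : ℕ) : ℕ∞) (nuE p (i - p) + 2))
    (h4 : 1 < nuE p (i - p) → l + 2 = 2 →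
      (e : ℕ∞) = min ((3 + N : ℕ) : ℕ∞) (nuE p (i - p - (p : ℤ) ^ (N + 1)) + 1)) (k : ℕ) :
    ((p : ZLoc p) ^ k ∣ p ^ (l + 2 + N) * i ∧
      (p : ZLoc p) ^ k ∣ p ^ (l + 1) * ((i - p) - p ^ N * i * (1 + p * z)) ∧
      (p : ZLoc p) ^ k ∣ p * i * (i - p)) ↔ k ≤ e := by
  obtain ⟨N, rfl⟩ := Nat.exists_eq_add_of_le' hN
  have hnu0 : ∀ x : ℤ, ¬ (p : ℤ) ∣ x → nuE p x = 0 := by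
    intro x hx
    have := le_nuE_iff p 1 x
    rw [pow_one, Nat.cast_one] at this
    rw [← this, not_le, Order.lt_one_iff] at hx
    exact hx
  by_cases hpi : (p : ℤ) ∣ i
  swap
  · -- `i` is prime to `p`, so the last number is `p` times a unit.
    rw [h1 (hnu0 i hpi)]
    have hu : IsUnit ((i : ZLoc p) * (i - p)) := by
      have a1 : IsUnit (i : ZLoc p) := isUnit_intCast.2 hpi
      refine a1.mul ?_
      have := isUnit_add_p_mul a1 (-1)
      rwa [mul_neg_one, ← sub_eq_add_neg] at this
    rw [mul_assoc (p : ZLoc p), hu.dvd_mul_right, ← pow_dvd_pow_iff (p := p) k 1, pow_one]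
    refine ⟨fun h => h.2.2, fun h => ⟨h.trans ⟨p ^ (l + 1 + (N + 1)) * i, by ring⟩,
      h.trans ⟨p ^ l * ((i - p) - p ^ (N + 1) * i * (1 + p * z)), by ring⟩, h⟩⟩
  obtain ⟨j, rfl⟩ := hpi
  by_cases hy : (p : ℤ) ∣ j - 1
  swap
  · -- `i - p` is `p` times a unit.
    have hnu : nuE p ((p : ℤ) * j - p) = 1 := by
      have e1 := le_nuE_iff p 1 ((p : ℤ) * j - p)
      have e2 := le_nuE_iff p 2 ((p : ℤ) * j - p)
      have hp0 : (p : ℤ) ≠ 0 := by exact_mod_cast (Fact.out : p.Prime).ne_zero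
      rw [show (p : ℤ) * j - p = p * (j - 1) by ring] at e1 e2 ⊢
      have a1 := e1.2 ⟨j - 1, by ring⟩
      have a2 : ¬ ((2 : ℕ) : ℕ∞) ≤ nuE p (p * (j - 1)) := by
        rw [e2, pow_two, mul_dvd_mul_iff_left hp0]
        exact hy
      generalize nuE p (p * (j - 1)) = x at a1 a2
      induction x using ENat.recTopCoe with
      | top => simp at a2
      | coe x =>
        norm_cast at a1 a2 ⊢
        omega
    have hv : IsUnit ((j : ZLoc p) - 1) := by
      have := (isUnit_intCast (p := p)).2 hy
      simpa using this
    have hv' : IsUnit ((j : ZLoc p) - 1 + p * (-(p ^ N * j * (1 + p * z)))) :=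
      isUnit_add_p_mul hv _
    have he : k ≤ e ↔ (p : ZLoc p) ^ k ∣ p ^ (l + 2) ∧
        (p : ZLoc p) ^ k ∣ p ^ 2 * ((p * j : ℤ) : ZLoc p) := by
      rw [← le_nuE_add_iff, pow_dvd_pow_iff, ← Nat.cast_le (α := ℕ∞), h2 hnu, le_min_iff,
        Nat.cast_le]
      rfl
    rw [he]
    push_cast
    rw [show (p : ZLoc p) ^ (l + 1) * ((p * j - p) - p ^ (N + 1) * (p * j) * (1 + p * z)) =
        p ^ (l + 2) * ((j : ZLoc p) - 1 + p * (-(p ^ N * j * (1 + p * z)))) by ring,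
      hv'.dvd_mul_right,
      show (p : ZLoc p) * (p * j) * (p * j - p) = p ^ 2 * (p * j) * (j - 1) by ring,
      hv.dvd_mul_right]
    refine ⟨fun h => h.2, fun h => ⟨h.2.trans ⟨p ^ (l + (N + 1)), by ring⟩, h⟩⟩
  · -- `i - p` is divisible by `p ^ 2`, and `i` is `p` times the unit `j`.
    obtain ⟨y, hy⟩ := hy
    obtain rfl : j = p * y + 1 := by linarith
    have hnu : 1 < nuE p ((p : ℤ) * (p * y + 1) - p) := by
      have e2 := (le_nuE_iff p 2 ((p : ℤ) * (p * y + 1) - p)).2 ⟨y, by ring⟩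
      exact lt_of_lt_of_le (by norm_num) e2
    have hj : IsUnit ((1 : ZLoc p) + p * y) := isUnit_add_p_mul isUnit_one _
    rcases Nat.eq_zero_or_pos l with rfl | hl
    · have he : k ≤ e ↔ (p : ZLoc p) ^ k ∣ p ^ (3 + (N + 1)) ∧
          (p : ZLoc p) ^ k ∣ p ^ 1 * ((p * (p * y + 1) - p - p ^ (N + 1 + 1) : ℤ) : ZLoc p) := by
        rw [← le_nuE_add_iff, pow_dvd_pow_iff, ← Nat.cast_le (α := ℕ∞), h4 hnu rfl, le_min_iff,
          Nat.cast_le]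
        rfl
      rw [he]
      push_cast
      rw [show (p : ZLoc p) ^ (0 + 2 + (N + 1)) * (p * (p * y + 1)) =
          p ^ (3 + (N + 1)) * (1 + p * y) by ring, hj.dvd_mul_right]
      refine and_congr_right fun hA => ?_
      rw [show (p : ZLoc p) * (p * (p * y + 1)) * (p * (p * y + 1) - p) =
          p * (p * (p * (p * y + 1) - p)) * (1 + p * y) by ring, hj.dvd_mul_right,
        show (p : ZLoc p) ^ (0 + 1) * (p * (p * y + 1) - p -
          p ^ (N + 1) * (p * (p * y + 1)) * (1 + p * z)) =
          p ^ 1 * (p * (p * y + 1) - p - p ^ (N + 1 + 1)) +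
          p ^ (3 + (N + 1)) * (-(y + (p * y + 1) * z)) by ring,
        dvd_add_left (hA.mul_right _),
        show (p : ZLoc p) * (p * (p * (p * y + 1) - p)) =
          p ^ 1 * (p * (p * y + 1) - p - p ^ (N + 1 + 1)) * p + p ^ (3 + (N + 1)) by ring,
        dvd_add_left hA]
      exact ⟨fun h => h.1, fun h => ⟨h, h.mul_right _⟩⟩
    · obtain ⟨l, rfl⟩ := Nat.exists_eq_add_of_le' hl
      have he : k ≤ e ↔ (p : ZLoc p) ^ k ∣ p ^ (l + 1 + 2 + (N + 1)) ∧
          (p : ZLoc p) ^ k ∣ p ^ 2 * ((p * (p * y + 1) - p : ℤ) : ZLoc p) := by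
        rw [← le_nuE_add_iff, pow_dvd_pow_iff, ← Nat.cast_le (α := ℕ∞), h3 hnu (by omega),
          le_min_iff, Nat.cast_le]
        rfl
      rw [he]
      push_cast
      have hz : IsUnit ((1 : ZLoc p) + p * z) := isUnit_add_p_mul isUnit_one _
      have hC : (p : ZLoc p) ^ k ∣ p * (p * (p * y + 1)) * (p * (p * y + 1) - p) ↔
          (p : ZLoc p) ^ k ∣ p ^ 2 * (p * (p * y + 1) - p) := by
        rw [show (p : ZLoc p) * (p * (p * y + 1)) * (p * (p * y + 1) - p) =
          p ^ 2 * (p * (p * y + 1) - p) * (1 + p * y) by ring, hj.dvd_mul_right]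
      rw [hC, ← and_assoc]
      refine and_congr_left fun hY => ?_
      rw [show (p : ZLoc p) ^ (l + 1 + 1) * (p * (p * y + 1) - p -
          p ^ (N + 1) * (p * (p * y + 1)) * (1 + p * z)) =
          p ^ 2 * (p * (p * y + 1) - p) * p ^ l +
          p ^ (l + 1 + 2 + (N + 1)) * (-(1 + p * y) * (1 + p * z)) by ring,
        dvd_add_right (hY.mul_right _), (hj.neg.mul hz).dvd_mul_right]
      exact ⟨fun h => h.2, fun h => ⟨h.mul_right _, h⟩⟩

end ZLoc

/-- Davis' Proposition 6.6b (case `ε = 1`, `n ≥ 2`): even-degree `v₁`-periodic homotopy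
groups of a space whose `K`-theory looks like an `S^{2n+1}`-bundle over
`S^{2n+1+2p(p-1)}` with attaching map `α_p`. -/
theorem stmt6 (p : ℕ) [Fact p.Prime] (hodd : Odd p) (r : ℤ)
    (hr : ∀ v : (ZMod (p ^ 2))ˣ, ∃ j : ℕ, (v : ZMod (p ^ 2)) = (r : ZMod (p ^ 2)) ^ j)
    (u : ZLoc p) (hu : IsUnit u)
    (n : ℕ) (hn : 2 ≤ n) (m : ℤ) :
    (¬ ((p : ℤ) - 1 ∣ m - n) →
      Subsingleton (QuotMod2 p
        {![0, (p : ℚ) ^ (n + p * (p - 1))],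
         ![(p : ℚ) ^ n, (u : ℚ) * (p : ℚ) ^ (n - 1) * ((p : ℚ) ^ (p * (p - 1)) - 1)],
         ![0, (r : ℚ) ^ (n + p * (p - 1)) - (r : ℚ) ^ m],
         ![(r : ℚ) ^ n - (r : ℚ) ^ m,
           ((u : ℚ) / p) * (r : ℚ) ^ n * ((r : ℚ) ^ (p * (p - 1)) - 1)]})) ∧
    (∀ i : ℤ, m = n + ((p : ℤ) - 1) * i → ∀ e : ℕ,
      (nuE p i = 0 → e = 1) →
      (nuE p (i - p) = 1 → (e : ℕ∞) = min (n : ℕ∞) (nuE p i + 2)) →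
      (1 < nuE p (i - p) → 3 ≤ n →
        (e : ℕ∞) = min ((n + p * (p - 1) : ℕ) : ℕ∞) (nuE p (i - p) + 2)) →
      (1 < nuE p (i - p) → n = 2 →
        (e : ℕ∞) = min ((3 + p * (p - 1) : ℕ) : ℕ∞)
          (nuE p (i - p - (p : ℤ) ^ (p * (p - 1) + 1)) + 1)) →
      Nonempty ((QuotMod2 p
        {![0, (p : ℚ) ^ (n + p * (p - 1))],
         ![(p : ℚ) ^ n, (u : ℚ) * (p : ℚ) ^ (n - 1) * ((p : ℚ) ^ (p * (p - 1)) - 1)],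
         ![0, (r : ℚ) ^ (n + p * (p - 1)) - (r : ℚ) ^ m],
         ![(r : ℚ) ^ n - (r : ℚ) ^ m,
           ((u : ℚ) / p) * (r : ℚ) ^ n * ((r : ℚ) ^ (p * (p - 1)) - 1)]}) ≃+
        (ZMod p × ZMod (p ^ e)))) := by
  have hp : p.Prime := Fact.out
  have hpQ : (p : ℚ) ≠ 0 := by exact_mod_cast hp.ne_zero
  have hp1 : ((p - 1 : ℕ) : ℤ) = (p : ℤ) - 1 := by rw [Nat.cast_sub hp.one_le, Nat.cast_one]
  have hN : 1 ≤ p * (p - 1) := Nat.mul_pos hp.pos (Nat.sub_pos_of_lt hp.one_lt)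
  obtain ⟨R, a, hR, ha, hRa, hord⟩ := ZLoc.generator_facts hodd r hr
  have hRq : ((R : ZLoc p) : ℚ) = r := by rw [hR]; simp
  have hzpow : ∀ j : ℤ, (r : ℚ) ^ j = (((R ^ j : (ZLoc p)ˣ) : ZLoc p) : ℚ) := by
    intro j
    have := congrArg Units.val (map_zpow (Units.map ((ZLoc p).subtype : ZLoc p →* ℚ)) R j)
    rw [Units.val_zpow_eq_zpow_val] at this
    rw [← hRq]
    exact this.symm
  have hpow : ∀ j : ℕ, (r : ℚ) ^ j = (((R : ZLoc p) ^ j : ZLoc p) : ℚ) := by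
    intro j
    rw [← hRq]
    push_cast
    rfl
  -- `g ^ j = 1 + p * j * α j` with `α j` a unit congruent to `a` modulo `p`.
  obtain ⟨g, hgR⟩ : ∃ g : (ZLoc p)ˣ, g = R ^ (p - 1) := ⟨_, rfl⟩
  have hg : (g : ZLoc p) = 1 + p * a := by rw [hgR, Units.val_pow_eq_pow_val, hRa]
  choose b hb using ZLoc.exists_zpow_eq hodd a g hg
  have hα : ∀ j, IsUnit (a + p * b j) := fun j => ZLoc.isUnit_add_p_mul ha _
  have hgp : (R : ZLoc p) ^ (p * (p - 1)) = 1 + p * p * (a + p * b p) := by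
    have := hb p
    rw [zpow_natCast, Int.cast_natCast] at this
    rw [← this, hgR, mul_comm p, pow_mul, Units.val_pow_eq_pow_val, Units.val_pow_eq_pow_val]
  have hd₂ : ((u : ℚ) / p) * (r : ℚ) ^ n * ((r : ℚ) ^ (p * (p - 1)) - 1) =
      ((p * (u * R ^ n * (a + p * b p)) : ZLoc p) : ℚ) := by
    rw [hpow, hpow, hgp]
    push_cast
    field_simp
    ring
  constructor
  · intro hm
    refine ZLoc.subsingleton_quot _ _ _ _ ((R : ZLoc p) ^ (n + p * (p - 1)) - (R ^ m : (ZLoc p)ˣ))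
      ((R : ZLoc p) ^ n - (R ^ m : (ZLoc p)ˣ))
      (p * (u * R ^ n * (a + p * b p))) ?_ ?_ ?_ ?_
    · have h1 := hord (m - ((n + p * (p - 1) : ℕ) : ℤ)) (by
        intro h
        apply hm
        have h2 : m - n = m - ((n + p * (p - 1) : ℕ) : ℤ) + ((p : ℤ) - 1) * p := by
          push_cast [hp1]
          ring
        rw [h2]
        exact dvd_add h (dvd_mul_right _ _))
      have h2 := (R ^ (n + p * (p - 1))).isUnit.neg.mul h1
      rw [zpow_sub, zpow_natCast] at h2
      convert h2 using 1
      have h3 := (R ^ (n + p * (p - 1))).mul_inv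
      rw [Units.val_mul, ← Units.val_pow_eq_pow_val]
      linear_combination ((R ^ m : (ZLoc p)ˣ) : ZLoc p) * h3
    · have h1 := hord (m - n) hm
      have h2 := (R ^ n).isUnit.neg.mul h1
      rw [zpow_sub, zpow_natCast] at h2
      convert h2 using 1
      have h3 := (R ^ n).mul_inv
      rw [Units.val_mul, ← Units.val_pow_eq_pow_val]
      linear_combination ((R ^ m : (ZLoc p)ˣ) : ZLoc p) * h3
    · rw [hpow, hzpow]
      push_cast
      rfl
    · rw [hd₂, hpow, hzpow]
      push_cast
      rfl
  · intro i hmi e h1 h2 h3 h4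
    obtain ⟨l, rfl⟩ := Nat.exists_eq_add_of_le' hn
    generalize hNN : p * (p - 1) = N at *
    obtain ⟨U, rfl⟩ := hu
    obtain ⟨αp, hαp⟩ := hα p
    obtain ⟨αi, hαi⟩ := hα i
    obtain ⟨αd, hαd⟩ := hα (p - i)
    obtain ⟨G, hG⟩ : ∃ G : (ZLoc p)ˣ, G = g ^ i := ⟨_, rfl⟩
    have hGi : (G : ZLoc p) = 1 + p * i * αi := by rw [hG, hb, hαi]
    -- The relation between `α p`, `α i` and `α (p - i)` coming from `g ^ p = g ^ i * g ^ (p - i)`.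
    have hGd : 1 + (p : ZLoc p) * p * αp = G * (1 + p * (p - i) * αd) := by
      have e1 := hb (p - i)
      have e2 := hb p
      rw [← hαd] at e1
      rw [← hαp] at e2
      push_cast at e1 e2
      rw [← e1, ← e2, hG, ← Units.val_mul, ← zpow_add, add_sub_cancel]
    have hrel : (p : ZLoc p) * αp - i * αi = G * (p - i) * αd := by
      apply mul_left_cancel₀ (ZLoc.p_ne_zero (p := p))
      linear_combination hGd + hGi
    have hm : ((R ^ m : (ZLoc p)ˣ) : ZLoc p) = R ^ (l + 2) * G := by
      rw [hmi, zpow_add, zpow_mul, ← hp1, zpow_natCast, zpow_natCast, ← hgR, ← hG,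
        Units.val_mul, Units.val_pow_eq_pow_val]
    obtain ⟨w, hw⟩ : ∃ w : (ZLoc p)ˣ, w = U * R ^ (l + 2) * αp := ⟨_, rfl⟩
    have hwv : (w : ZLoc p) = U * R ^ (l + 2) * αp := by rw [hw]; push_cast; rfl
    have hww := w.mul_inv
    -- `α i` and `G * α (p - i)` agree modulo `p`; their quotient is `1 + p * z`.
    obtain ⟨H, hH⟩ : ∃ H : (ZLoc p)ˣ, H = G * αd := ⟨_, rfl⟩
    have hHv : (H : ZLoc p) = G * αd := by rw [hH]; push_cast; rfl
    have hHH := H.mul_inv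
    obtain ⟨z, hz⟩ : ∃ z : ZLoc p, (αi : ZLoc p) = H * (1 + p * z) := by
      refine ⟨(b i - b (p - i) - i * αi * αd) * (H⁻¹ : (ZLoc p)ˣ), ?_⟩
      have e1 : (αi : ZLoc p) - H = p * (b i - b (p - i) - i * αi * αd) := by
        rw [hHv]
        linear_combination hαi - hαd - (αd : ZLoc p) * hGi
      linear_combination e1 - p * (b i - b (p - i) - i * αi * αd) * hHH
    have hgcd := ZLoc.pow_dvd_iff_le l N hN i z e h1 h2 h3 h4
    refine ZLoc.nonempty_quot_equiv (-(R ^ (l + 2) * i * αi) : ZLoc p)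
      (p ^ (l + 1 + N) * (w⁻¹ : (ZLoc p)ˣ)) (U * (w⁻¹ : (ZLoc p)ˣ) * p ^ l * (p ^ N - 1))
      ((w⁻¹ : (ZLoc p)ˣ) * R ^ (l + 2) * G * (p - i) * αd)
      (p ^ (l + 2 + N) * i * (w⁻¹ * R ^ (l + 2) * αi : (ZLoc p)ˣ))
      (p ^ (l + 1) * ((i - p) - p ^ N * i * (1 + p * z)) *
        (-(w⁻¹ * U * R ^ (l + 2) * H) : (ZLoc p)ˣ))
      (p * i * (i - p) * (-(w⁻¹ * R ^ (l + 2) * R ^ (l + 2) * αi * G * αd) : (ZLoc p)ˣ))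
      w e ?_ _ _ _ _ ?_ ?_ ?_ ?_
    · intro k
      rw [Units.dvd_mul_right, Units.dvd_mul_right, Units.dvd_mul_right]
      exact hgcd k
    · have e1 : (p : ZLoc p) ^ (l + 1 + N) * (w⁻¹ : (ZLoc p)ˣ) * (p * -(R ^ (l + 2) * i * αi)) +
          p ^ (l + 2 + N) * i * (w⁻¹ * R ^ (l + 2) * αi : (ZLoc p)ˣ) = 0 := by
        push_cast
        ring
      have e2 : (p : ZLoc p) ^ (l + 1 + N) * (w⁻¹ : (ZLoc p)ˣ) * (p * w) = p ^ (l + 2 + N) := by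
        linear_combination (p : ZLoc p) ^ (l + 2 + N) * hww
      rw [e1, e2]
      push_cast
      rfl
    · have e1 : (U : ZLoc p) * (w⁻¹ : (ZLoc p)ˣ) * p ^ l * (p ^ N - 1) *
          (p * -(R ^ (l + 2) * i * αi)) + p ^ (l + 1) * ((i - p) - p ^ N * i * (1 + p * z)) *
          (-(w⁻¹ * U * R ^ (l + 2) * H) : (ZLoc p)ˣ) = p ^ (l + 2) := by
        push_cast
        generalize ((w⁻¹ : (ZLoc p)ˣ) : ZLoc p) = W at *
        have e3 : (p : ZLoc p) * αp + (p ^ N - 1) * i * αi =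
            -((i - p) - p ^ N * i * (1 + p * z)) * H := by
          linear_combination hrel + (p : ZLoc p) ^ N * i * hz - ((p : ZLoc p) - i) * hHv
        linear_combination (p : ZLoc p) ^ (l + 2) * hww - W * (p : ZLoc p) ^ (l + 2) * hwv
          - W * U * R ^ (l + 2) * (p : ZLoc p) ^ (l + 1) * e3
      have e2 : (U : ZLoc p) * (w⁻¹ : (ZLoc p)ˣ) * p ^ l * (p ^ N - 1) * (p * w) =
          U * p ^ (l + 1) * (p ^ N - 1) := by
        linear_combination (U : ZLoc p) * p ^ (l + 1) * (p ^ N - 1) * hww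
      rw [e1, e2]
      push_cast
      rfl
    · have e1 : ((w⁻¹ : (ZLoc p)ˣ) : ZLoc p) * R ^ (l + 2) * G * (p - i) * αd *
          (p * -(R ^ (l + 2) * i * αi)) + p * i * (i - p) *
          (-(w⁻¹ * R ^ (l + 2) * R ^ (l + 2) * αi * G * αd) : (ZLoc p)ˣ) = 0 := by
        push_cast
        ring
      have e2 : ((w⁻¹ : (ZLoc p)ˣ) : ZLoc p) * R ^ (l + 2) * G * (p - i) * αd * (p * w) =
          R ^ (l + 2 + N) - (R ^ m : (ZLoc p)ˣ) := by
        rw [hm, pow_add _ (l + 2) N, hgp, ← hαp, hGd]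
        linear_combination (R : ZLoc p) ^ (l + 2) * G * (p - i) * αd * p * hww
      rw [e1, e2, hpow, hzpow]
      push_cast
      rfl
    · have e1 : (p : ZLoc p) * -(R ^ (l + 2) * i * αi) =
          R ^ (l + 2) - (R ^ m : (ZLoc p)ˣ) := by
        rw [hm, hGi]
        ring
      rw [e1, hwv, hd₂, ← hαp, hpow, hzpow]
      push_cast
      rfl

end
end

section
/- Let p be an odd prime, r an integer whose residue class generates (ℤ/p²)ˣ, and u a unit of ℤ_(p). For an integer m, let Q_m be the quotient of the free ℤ_(p)-module on two generators x, y by the submodule generated by p^{1+p(p-1)}·y; p·x + u·(p^{p(p-1)}-1)·y; (r^{1+p(p-1)} - r^m)·y; and (r - r^m)·x + (u/p)·r·(r^{p(p-1)}-1)·y. Then Q_m = 0 if m is not congruent to 1 modulo p-1; and if m = 1 + (p-1)i for an integer i, then Q_m is cyclic of order p^{min(2+p(p-1), ν_p(i-p)+1)}. -/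
/-!
Write `N = p (p - 1)` and `A = p ^ N - 1`, a unit of `ℤ_(p)`. The relation `p x + u A y` makes the
quotient cyclic: the functional `(a, b) ↦ u A a - p b` is onto `ℤ_(p)` with kernel spanned by that
relation. So the quotient is `ℤ_(p)` modulo the ideal generated by the images of the other three
relations, which are `-p ^ (N + 2)`, `-p D` and `u (F - D)`, where `D = r ^ (1 + N) - r ^ m` and
`F = p ^ N (r - r ^ m)`.

If `p - 1` does not divide `m - 1`, then `D` is a unit and `p ∣ F`, so the ideal is everything.
If `m = 1 + (p - 1) i`, lifting the exponent gives `ν(D) = 1 + ν(i - p)` and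
`ν(F) = N + 1 + ν(i)`. When `p ∣ i` this makes `F` a multiple of `p ^ (N + 2)`, so the ideal is
`(p ^ (N + 2), D)`; when `p ∤ i` one has `ν(D) = 1 < ν(F)`, so the ideal is `(p)`.

Valuations are handled as norms in `ℚ_[p]`; `ℤ_(p)` is the set of rationals of norm at most `1`
(`mem_ZLoc_iff`). The algebra is in `span_iff`, `quot_equiv` and `quot_equiv_of_norms`, the
valuations in `generator_facts`, `norm_zpow_sub_one_of_dvd` and `norm_zpow_sub_one_of_not_dvd`.
-/

set_option synthInstance.maxHeartbeats 1000000
set_option maxHeartbeats 1000000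

noncomputable section

/-! ### The lattice and the quotient as a cyclic module -/

theorem mem_ZLoc_iff {p : ℕ} [Fact p.Prime] {q : ℚ} :
    q ∈ ZLoc p ↔ ‖(q : ℚ_[p])‖ ≤ 1 := by
  rw [Padic.norm_rat_le_one_iff_padicValuation_le_one, Rat.padicValuation_le_one_iff]
  rfl

theorem mem_latt2_iff {p : ℕ} [Fact p.Prime] {v : Fin 2 → ℚ} :
    v ∈ latt2 p ↔ v 0 ∈ ZLoc p ∧ v 1 ∈ ZLoc p := by
  rw [latt2, Submodule.mem_span_pair]
  constructor
  · rintro ⟨a, b, rfl⟩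
    simp [Subring.smul_def]
  · rintro ⟨h0, h1⟩
    refine ⟨⟨_, h0⟩, ⟨_, h1⟩, ?_⟩
    ext j
    fin_cases j <;> simp [Subring.smul_def]

theorem padic_norm_sub_le {p : ℕ} [Fact p.Prime] {x y : ℚ_[p]} {t : ℝ}
    (hx : ‖x‖ ≤ t) (hy : ‖y‖ ≤ t) : ‖x - y‖ ≤ t := by
  rw [sub_eq_add_neg]
  exact (Padic.nonarchimedean _ _).trans (max_le hx (by rwa [norm_neg]))

/-- Modulo `p • x + c • y` with `c` a unit, the free module is cyclic on `x`, the projection being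
the functional `v ↦ c * v 0 - p * v 1` up to a unit. The submodule spanned by the relations is then
the preimage of an ideal `(p ^ e)`: the remaining relations map to `-p ^ (N + 2)`, `-p * D` and
`c * X - p * Y`, and one of the first and the last generates the ideal. -/
theorem span_iff {p : ℕ} [Fact p.Prime] (N e : ℕ) (c D X Y : ℚ)
    (hc : ‖(c : ℚ_[p])‖ = 1) (hD : ‖(D : ℚ_[p])‖ ≤ 1) (hX : ‖(X : ℚ_[p])‖ ≤ 1)
    (hY : ‖(Y : ℚ_[p])‖ ≤ 1) (he : e ≤ N + 2)
    (hpD : ‖((p * D : ℚ) : ℚ_[p])‖ ≤ (p : ℝ) ^ (-e : ℤ))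
    (hT : ‖((c * X - p * Y : ℚ) : ℚ_[p])‖ ≤ (p : ℝ) ^ (-e : ℤ))
    (hT' : ‖((c * X - p * Y : ℚ) : ℚ_[p])‖ = (p : ℝ) ^ (-e : ℤ) ∨ e = N + 2)
    (v : Fin 2 → ℚ) :
    v ∈ Submodule.span (ZLoc p)
      {![0, (p : ℚ) ^ (1 + N)], ![(p : ℚ), c], ![0, D], ![X, Y]} ↔
    v ∈ latt2 p ∧ ‖((c * v 0 - p * v 1 : ℚ) : ℚ_[p])‖ ≤ (p : ℝ) ^ (-e : ℤ) := by
  have hp1 : (1 : ℝ) < p := by exact_mod_cast (Fact.out : p.Prime).one_lt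
  have hpc : ‖(p : ℚ_[p])‖ ≤ 1 := Padic.norm_p_lt_one.le
  have hc0 : c ≠ 0 := by rintro rfl; simp at hc
  have hpow : ‖(((p : ℚ) ^ (1 + N) : ℚ) : ℚ_[p])‖ ≤ 1 := by
    push_cast
    rw [norm_pow]
    exact pow_le_one₀ (norm_nonneg _) hpc
  constructor
  · intro h
    induction h using Submodule.span_induction with
    | mem x hx =>
      simp only [Set.mem_insert_iff, Set.mem_singleton_iff] at hx
      rcases hx with rfl | rfl | rfl | rfl
      · refine ⟨mem_latt2_iff.2 ⟨by simp, ?_⟩, ?_⟩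
        · exact mem_ZLoc_iff.2 hpow
        · have : ((c * (![0, (p : ℚ) ^ (1 + N)] : Fin 2 → ℚ) 0
              - p * (![0, (p : ℚ) ^ (1 + N)] : Fin 2 → ℚ) 1 : ℚ) : ℚ_[p])
              = - (p : ℚ_[p]) ^ (N + 2) := by
            simp; ring
          rw [this, norm_neg, Padic.norm_p_pow]
          exact zpow_le_zpow_right₀ hp1.le (by push_cast; omega)
      · refine ⟨mem_latt2_iff.2 ⟨?_, ?_⟩, ?_⟩
        · rw [mem_ZLoc_iff]; simpa using hpc
        · rw [mem_ZLoc_iff]; simpa using hc.le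
        · have : (c * (![(p : ℚ), c] : Fin 2 → ℚ) 0
              - p * (![(p : ℚ), c] : Fin 2 → ℚ) 1 : ℚ) = 0 := by
            simp; ring
          rw [this]; simp
      · refine ⟨mem_latt2_iff.2 ⟨by simp, ?_⟩, ?_⟩
        · rw [mem_ZLoc_iff]; simpa using hD
        · simpa using hpD
      · refine ⟨mem_latt2_iff.2 ⟨?_, ?_⟩, ?_⟩
        · rw [mem_ZLoc_iff]; simpa using hX
        · rw [mem_ZLoc_iff]; simpa using hY
        · simpa using hT
    | zero => exact ⟨zero_mem _, by simp⟩
    | add x y _ _ hx hy =>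
      refine ⟨add_mem hx.1 hy.1, ?_⟩
      have : ((c * (x + y) 0 - p * (x + y) 1 : ℚ) : ℚ_[p]) =
          ((c * x 0 - p * x 1 : ℚ) : ℚ_[p]) + ((c * y 0 - p * y 1 : ℚ) : ℚ_[p]) := by
        simp; ring
      rw [this]
      exact (Padic.nonarchimedean _ _).trans (max_le hx.2 hy.2)
    | smul a x _ hx =>
      refine ⟨Submodule.smul_mem _ _ hx.1, ?_⟩
      have : ((c * (a • x) 0 - p * (a • x) 1 : ℚ) : ℚ_[p]) =
          ((a : ℚ) : ℚ_[p]) * ((c * x 0 - p * x 1 : ℚ) : ℚ_[p]) := by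
        simp [Subring.smul_def]; ring
      rw [this, norm_mul]
      exact (mul_le_of_le_one_left (norm_nonneg _) (mem_ZLoc_iff.1 a.2)).trans hx.2
  · rintro ⟨hv, hn⟩
    obtain ⟨h0, h1⟩ := mem_latt2_iff.1 hv
    -- a generator `w` on which the functional takes a value of norm exactly `p ^ (-e)`
    obtain ⟨w, hw, hwl, hwn⟩ : ∃ w ∈ Submodule.span (ZLoc p)
        ({![0, (p : ℚ) ^ (1 + N)], ![(p : ℚ), c], ![0, D], ![X, Y]} : Set (Fin 2 → ℚ)),
        ‖((w 1 : ℚ) : ℚ_[p])‖ ≤ 1 ∧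
        ‖((c * w 0 - p * w 1 : ℚ) : ℚ_[p])‖ = (p : ℝ) ^ (-e : ℤ) := by
      rcases hT' with h | rfl
      · exact ⟨![X, Y], Submodule.subset_span (by simp), by simpa using hY, by simpa using h⟩
      · refine ⟨![0, (p : ℚ) ^ (1 + N)], Submodule.subset_span (by simp), ?_, ?_⟩
        · exact hpow
        · have : ((c * (![0, (p : ℚ) ^ (1 + N)] : Fin 2 → ℚ) 0
              - p * (![0, (p : ℚ) ^ (1 + N)] : Fin 2 → ℚ) 1 : ℚ) : ℚ_[p])
              = - (p : ℚ_[p]) ^ (N + 2) := by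
            simp; ring
          rw [this, norm_neg, Padic.norm_p_pow]
    set τ : ℚ := c * w 0 - p * w 1 with hτ
    set t : ℚ := c * v 0 - p * v 1 with ht
    have hpe : (0 : ℝ) < (p : ℝ) ^ (-e : ℤ) := by positivity
    have hτ0 : τ ≠ 0 := by
      intro h
      rw [h, Rat.cast_zero, norm_zero] at hwn
      exact hpe.ne hwn
    have ha : t / τ ∈ ZLoc p := by
      rw [mem_ZLoc_iff]; push_cast
      rw [norm_div, hwn]
      exact div_le_one_of_le₀ hn hpe.le
    have hb : (v 1 - t / τ * w 1) / c ∈ ZLoc p := by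
      rw [mem_ZLoc_iff]
      push_cast
      rw [norm_div, hc, div_one]
      refine padic_norm_sub_le (mem_ZLoc_iff.1 h1) ?_
      rw [norm_mul]
      refine mul_le_one₀ ?_ (norm_nonneg _) hwl
      simpa using mem_ZLoc_iff.1 ha
    have key : v = (⟨_, ha⟩ : ZLoc p) • w + (⟨_, hb⟩ : ZLoc p) • ![(p : ℚ), c] := by
      ext j
      fin_cases j
      · simp only [Subring.smul_def, Pi.add_apply, Pi.smul_apply, smul_eq_mul, Fin.zero_eta,
          Matrix.cons_val_zero]
        have : c * v 0 = t / τ * τ + p * v 1 := by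
          rw [div_mul_cancel₀ _ hτ0]; ring
        have h2 : t / τ * τ = t / τ * (c * w 0 - p * w 1) := by rw [hτ]
        rw [h2] at this
        generalize t / τ = s at *
        field_simp
        linarith
      · simp [Subring.smul_def]
        field_simp
        ring
    rw [key]
    exact add_mem (Submodule.smul_mem _ _ hw)
      (Submodule.smul_mem _ _ (Submodule.subset_span (by simp)))

/-- If the submodule of relations is the preimage of `(p ^ e)` under `v ↦ c * v 0 - p * v 1` with
`c` a unit, the quotient is identified with `ℤ / p ^ e` through `ℤ_(p) → ℤ_[p] → ℤ / p ^ e`. -/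
theorem quot_equiv {p : ℕ} [Fact p.Prime] (e : ℕ) (c : ℚ) (s : Set (Fin 2 → ℚ))
    (hc : ‖(c : ℚ_[p])‖ = 1)
    (hs : ∀ v : Fin 2 → ℚ, v ∈ Submodule.span (ZLoc p) s ↔
      v ∈ latt2 p ∧ ‖((c * v 0 - p * v 1 : ℚ) : ℚ_[p])‖ ≤ (p : ℝ) ^ (-e : ℤ)) :
    Nonempty (QuotMod2 p s ≃+ ZMod (p ^ e)) := by
  have hc0 : c ≠ 0 := by rintro rfl; simp at hc
  have hnorm (v : latt2 p) : ‖((c * v.1 0 - p * v.1 1 : ℚ) : ℚ_[p])‖ ≤ 1 := by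
    obtain ⟨h0, h1⟩ := mem_latt2_iff.1 v.2
    push_cast
    refine padic_norm_sub_le ?_ ?_ <;> rw [norm_mul]
    · rw [hc, one_mul]; exact mem_ZLoc_iff.1 h0
    · exact mul_le_one₀ Padic.norm_p_lt_one.le (norm_nonneg _) (mem_ZLoc_iff.1 h1)
  let g : latt2 p →+ ℤ_[p] := AddMonoidHom.mk'
    (fun v => ⟨((c * v.1 0 - p * v.1 1 : ℚ) : ℚ_[p]), hnorm v⟩) (by
      intro a b
      apply PadicInt.ext
      change ((c * (a.1 0 + b.1 0) - p * (a.1 1 + b.1 1) : ℚ) : ℚ_[p]) =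
        ((c * a.1 0 - p * a.1 1 : ℚ) : ℚ_[p]) + ((c * b.1 0 - p * b.1 1 : ℚ) : ℚ_[p])
      push_cast
      ring)
  have hg (v : latt2 p) : (g v : ℚ_[p]) = ((c * v.1 0 - p * v.1 1 : ℚ) : ℚ_[p]) := rfl
  let φ : latt2 p →+ ZMod (p ^ e) := (PadicInt.toZModPow e).toAddMonoidHom.comp g
  have hφv (v : latt2 p) : φ v = PadicInt.toZModPow e (g v) := rfl
  have hφ : Function.Surjective φ := by
    intro z
    have hz : (![((z.val : ℕ) : ℚ) / c, 0] : Fin 2 → ℚ) ∈ latt2 p := by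
      refine mem_latt2_iff.2 ⟨?_, by simp [zero_mem]⟩
      rw [mem_ZLoc_iff]
      simp only [Matrix.cons_val_zero]
      push_cast
      rw [norm_div, hc, div_one]
      exact_mod_cast Padic.norm_int_le_one (p := p) (z.val : ℤ)
    refine ⟨⟨_, hz⟩, ?_⟩
    have h1 : g ⟨_, hz⟩ = ((z.val : ℕ) : ℤ_[p]) := by
      apply PadicInt.ext
      have : c * (((z.val : ℕ) : ℚ) / c) = (z.val : ℕ) := by field_simp
      rw [hg]
      simp only [Matrix.cons_val_zero, Matrix.cons_val_one, mul_zero, sub_zero, this]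
      rw [PadicInt.coe_natCast, Rat.cast_natCast]
    rw [hφv, h1, map_natCast]
    have : NeZero (p ^ e) := ⟨pow_ne_zero _ (Fact.out : p.Prime).ne_zero⟩
    exact ZMod.natCast_zmod_val z
  have hker : (Submodule.comap (latt2 p).subtype (Submodule.span (ZLoc p) s)).toAddSubgroup
      = φ.ker := by
    ext v
    rw [AddMonoidHom.mem_ker, hφv, ← RingHom.mem_ker, PadicInt.ker_toZModPow,
      ← PadicInt.norm_le_pow_iff_mem_span_pow, PadicInt.norm_def, hg]
    change v.1 ∈ Submodule.span (ZLoc p) s ↔ _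
    rw [hs]
    exact and_iff_right v.2
  exact ⟨(QuotientAddGroup.quotientAddEquivOfEq hker).trans
    (QuotientAddGroup.quotientKerEquivOfSurjective φ hφ)⟩

/-! ### Valuations of `r ^ k - 1` -/

theorem norm_eq_of_emultiplicity_eq {p : ℕ} [hp : Fact p.Prime] {a b : ℤ}
    (h : emultiplicity (p : ℤ) a = emultiplicity (p : ℤ) b) :
    ‖(a : ℚ_[p])‖ = ‖(b : ℚ_[p])‖ := by
  have key : ∀ a b : ℤ, emultiplicity (p : ℤ) a = emultiplicity (p : ℤ) b →
      ‖(a : ℚ_[p])‖ ≤ ‖(b : ℚ_[p])‖ := by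
    intro a b h
    by_cases hb : b = 0
    · subst hb
      rw [emultiplicity_zero, emultiplicity_eq_top, Int.finiteMultiplicity_iff] at h
      have : a = 0 := by
        by_contra ha
        exact h ⟨by simpa using hp.out.ne_one, ha⟩
      simp [this]
    · rw [Padic.norm_eq_zpow_neg_valuation (x := (b : ℚ_[p])) (by exact_mod_cast hb),
        Padic.valuation_intCast, Padic.norm_int_le_pow_iff_dvd, pow_dvd_iff_le_emultiplicity, h,
        ← pow_dvd_iff_le_emultiplicity]
      exact padicValInt_dvd _
  exact le_antisymm (key _ _ h) (key _ _ h.symm)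

theorem norm_zpow_neg_sub_one {p : ℕ} [Fact p.Prime] {x : ℚ_[p]} (hx : ‖x‖ = 1) (k : ℤ) :
    ‖x ^ (-k) - 1‖ = ‖x ^ k - 1‖ := by
  have hx0 : x ≠ 0 := by rintro rfl; simp at hx
  have : x ^ (-k) - 1 = - (x ^ (-k) * (x ^ k - 1)) := by
    rw [mul_sub, ← zpow_add₀ hx0]; simp
  rw [this, norm_neg, norm_mul, norm_zpow, hx, one_zpow, one_mul]

/-- A generator `r` of `(ℤ/p²)ˣ` is prime to `p`, has order exactly `p - 1` modulo `p`, and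
satisfies `r ^ (p - 1) ≢ 1` modulo `p²`. -/
theorem generator_facts {p : ℕ} [hp : Fact p.Prime] (hodd : Odd p) (r : ℤ)
    (hr : ∀ v : (ZMod (p ^ 2))ˣ, ∃ j : ℕ, (v : ZMod (p ^ 2)) = (r : ZMod (p ^ 2)) ^ j) :
    ¬ (p : ℤ) ∣ r ∧ (∀ k : ℕ, (p : ℤ) ∣ r ^ k - 1 ↔ p - 1 ∣ k) ∧
      ¬ (p : ℤ) ^ 2 ∣ r ^ (p - 1) - 1 := by
  have hp2 : 2 < p := by
    have := hp.out.two_le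
    rcases hodd with ⟨k, rfl⟩; omega
  have hpr : ¬ (p : ℤ) ∣ r := by
    intro h
    -- a power of a multiple of `p` is never congruent to the unit `-1 ≠ 1`
    obtain ⟨j, hj⟩ := hr (-1)
    have hj' : (((-1 : ℤ)) : ZMod (p ^ 2)) = ((r ^ j : ℤ) : ZMod (p ^ 2)) := by
      push_cast; simpa using hj
    rw [ZMod.intCast_eq_intCast_iff_dvd_sub] at hj'
    have h1 : (p : ℤ) ∣ r ^ j - -1 := (dvd_pow_self _ two_ne_zero).trans (by exact_mod_cast hj')
    have h3 : (p : ℤ) ∣ 2 ∨ (p : ℤ) ∣ 1 := by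
      rcases Nat.eq_zero_or_pos j with rfl | hj0
      · left; simpa using h1
      · right
        have := dvd_sub h1 (h.trans (dvd_pow_self r hj0.ne'))
        simpa using this
    rcases h3 with h3 | h3
    · have := Int.le_of_dvd (by norm_num) h3; omega
    · have := Int.le_of_dvd (by norm_num) h3; omega
  have hcop : IsCoprime r ((p ^ 2 : ℕ) : ℤ) := by
    push_cast
    exact IsCoprime.pow_right ((Prime.coprime_iff_not_dvd (Nat.prime_iff_prime_int.1 hp.out)).2
      hpr).symm
  obtain ⟨g, hg⟩ : IsUnit (r : ZMod (p ^ 2)) := by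
    exact (ZMod.coe_int_isUnit_iff_isCoprime r (p ^ 2)).2 hcop.symm
  have hgen : ∀ v, v ∈ Subgroup.zpowers g := by
    intro v
    obtain ⟨j, hj⟩ := hr v
    refine ⟨j, Units.ext ?_⟩
    simp [hg, hj]
  have hord : orderOf g = p * (p - 1) := by
    rw [orderOf_eq_card_of_forall_mem_zpowers hgen, Nat.card_eq_fintype_card,
      ZMod.card_units_eq_totient, Nat.totient_prime_pow hp.out two_pos]
    simp
  have hd : p ∣ p ^ 2 := dvd_pow_self _ two_ne_zero
  set g' : (ZMod p)ˣ := ZMod.unitsMap hd g with hg'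
  have hg'r : (g' : ZMod p) = (r : ZMod p) := by
    rw [hg', ZMod.unitsMap_val, hg]
    simp
  have hord' : orderOf g' = p - 1 := by
    rw [orderOf_eq_card_of_forall_mem_zpowers, Nat.card_eq_fintype_card,
      ZMod.card_units_eq_totient, Nat.totient_prime hp.out]
    intro v
    obtain ⟨w, rfl⟩ := ZMod.unitsMap_surjective hd v
    obtain ⟨j, rfl⟩ := hgen w
    exact ⟨j, by simp [hg']⟩
  refine ⟨hpr, fun k => ?_, fun h => ?_⟩
  · rw [← hord', orderOf_dvd_iff_pow_eq_one, Units.ext_iff, ← ZMod.intCast_zmod_eq_zero_iff_dvd]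
    push_cast
    rw [hg'r, sub_eq_zero]
  · have h1 : g ^ (p - 1) = 1 := by
      apply Units.ext
      have : ((r ^ (p - 1) - 1 : ℤ) : ZMod (p ^ 2)) = 0 := by
        rw [ZMod.intCast_zmod_eq_zero_iff_dvd]; exact_mod_cast h
      push_cast at this ⊢
      rw [hg]; exact sub_eq_zero.1 this
    have h2 := Nat.le_of_dvd (by omega) (orderOf_dvd_of_pow_eq_one h1)
    rw [hord] at h2
    nlinarith [Nat.sub_pos_of_lt (show 1 < p by omega)]

/-- Lifting the exponent, for integer exponents of either sign:
`ν_p (r ^ ((p - 1) * k) - 1) = 1 + ν_p k`. -/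
theorem norm_zpow_sub_one_of_dvd {p : ℕ} [hp : Fact p.Prime] (hodd : Odd p) (r : ℤ)
    (hpr : ¬ (p : ℤ) ∣ r) (h1 : (p : ℤ) ∣ r ^ (p - 1) - 1)
    (h2 : ¬ (p : ℤ) ^ 2 ∣ r ^ (p - 1) - 1) (k : ℤ) :
    ‖(r : ℚ_[p]) ^ (((p : ℤ) - 1) * k) - 1‖ = (p : ℝ)⁻¹ * ‖(k : ℚ_[p])‖ := by
  have hr1 : ‖(r : ℚ_[p])‖ = 1 := by
    rw [Padic.norm_intCast_eq_one_iff]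
    exact ((Prime.coprime_iff_not_dvd (Nat.prime_iff_prime_int.1 hp.out)).2 hpr).symm
  have nat (n : ℕ) :
      ‖(r : ℚ_[p]) ^ (((p : ℤ) - 1) * n) - 1‖ = (p : ℝ)⁻¹ * ‖((n : ℤ) : ℚ_[p])‖ := by
    have hm : emultiplicity (p : ℤ) ((r ^ (p - 1)) ^ n - 1)
        = emultiplicity (p : ℤ) ((p : ℤ) * n) := by
      have := Int.emultiplicity_pow_sub_pow hp.out hodd (x := r ^ (p - 1)) (y := 1) h1
        (fun h => hpr ((Nat.prime_iff_prime_int.1 hp.out).dvd_of_dvd_pow h)) n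
      rw [one_pow] at this
      rw [this, emultiplicity_mul (Nat.prime_iff_prime_int.1 hp.out), ← Int.natCast_emultiplicity]
      congr 1
      rw [FiniteMultiplicity.emultiplicity_self (Int.finiteMultiplicity_iff.2
        ⟨by simpa using hp.out.ne_one, by exact_mod_cast hp.out.ne_zero⟩)]
      exact_mod_cast emultiplicity_eq_coe.2 ⟨by simpa using h1, by simpa using h2⟩
    have := norm_eq_of_emultiplicity_eq hm
    push_cast at this
    rw [norm_mul, Padic.norm_p] at this
    push_cast
    rw [← this, zpow_mul, zpow_natCast, ← zpow_natCast (r : ℚ_[p]) (p - 1),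
      Nat.cast_sub hp.out.one_le]
    simp
  obtain ⟨n, rfl | rfl⟩ := k.eq_nat_or_neg
  · exact nat n
  · rw [mul_neg, norm_zpow_neg_sub_one hr1, nat]
    simp

theorem norm_zpow_sub_one_of_not_dvd {p : ℕ} [hp : Fact p.Prime] (r : ℤ)
    (hpr : ¬ (p : ℤ) ∣ r) (h1 : ∀ k : ℕ, (p : ℤ) ∣ r ^ k - 1 ↔ p - 1 ∣ k)
    (k : ℤ) (hk : ¬ (p : ℤ) - 1 ∣ k) : ‖(r : ℚ_[p]) ^ k - 1‖ = 1 := by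
  have hr1 : ‖(r : ℚ_[p])‖ = 1 := by
    rw [Padic.norm_intCast_eq_one_iff]
    exact ((Prime.coprime_iff_not_dvd (Nat.prime_iff_prime_int.1 hp.out)).2 hpr).symm
  have nat (n : ℕ) (hn : ¬ (p : ℤ) - 1 ∣ n) : ‖(r : ℚ_[p]) ^ (n : ℤ) - 1‖ = 1 := by
    have h2 : ¬ (p : ℤ) ∣ r ^ n - 1 := by
      rw [h1, ← Int.natCast_dvd_natCast, Nat.cast_sub hp.out.one_le]
      exact hn
    rw [← Padic.norm_intCast_lt_one_iff, not_lt] at h2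
    have := le_antisymm (Padic.norm_int_le_one _) h2
    simpa using this
  obtain ⟨n, rfl | rfl⟩ := k.eq_nat_or_neg
  · exact nat n hk
  · rw [norm_zpow_neg_sub_one hr1, nat n (by simpa using hk)]

/-! ### The quotient from the valuations -/

/-- The quotient is `ℤ / p ^ e` as soon as, with `N = p * (p - 1)`, `D = r ^ (1 + N) - r ^ m` and
`F = p ^ N * (r - r ^ m)`, both `D` and `F` are divisible by `p ^ e`, and either `D` has valuation
exactly `e` and `F` a larger one, or `e = N + 2`. The norms of `D` and `F` are written in terms of
`r ^ k - 1`, as `r` is a `p`-adic unit. -/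
theorem quot_equiv_of_norms {p : ℕ} [hp : Fact p.Prime] (hodd : Odd p) (r : ℤ)
    (hr : ∀ v : (ZMod (p ^ 2))ˣ, ∃ j : ℕ, (v : ZMod (p ^ 2)) = (r : ZMod (p ^ 2)) ^ j)
    (u : ZLoc p) (hu : IsUnit u) (m : ℤ) (e : ℕ) (he : e ≤ p * (p - 1) + 2)
    (hD : ‖(r : ℚ_[p]) ^ (p * (p - 1) + 1 - m : ℤ) - 1‖ ≤ (p : ℝ) ^ (-e : ℤ))
    (hF : (p : ℝ) ^ (-(p * (p - 1) : ℕ) : ℤ) * ‖(r : ℚ_[p]) ^ (m - 1) - 1‖ ≤ (p : ℝ) ^ (-e : ℤ))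
    (h : (‖(r : ℚ_[p]) ^ (p * (p - 1) + 1 - m : ℤ) - 1‖ = (p : ℝ) ^ (-e : ℤ) ∧
      (p : ℝ) ^ (-(p * (p - 1) : ℕ) : ℤ) * ‖(r : ℚ_[p]) ^ (m - 1) - 1‖ < (p : ℝ) ^ (-e : ℤ)) ∨
      e = p * (p - 1) + 2) :
    Nonempty ((QuotMod2 p
        {![0, (p : ℚ) ^ (1 + p * (p - 1))],
         ![(p : ℚ), (u : ℚ) * ((p : ℚ) ^ (p * (p - 1)) - 1)],
         ![0, (r : ℚ) ^ (1 + p * (p - 1)) - (r : ℚ) ^ m],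
         ![(r : ℚ) - (r : ℚ) ^ m,
           ((u : ℚ) / p) * (r : ℚ) * ((r : ℚ) ^ (p * (p - 1)) - 1)]}) ≃+
        ZMod (p ^ e)) := by
  obtain ⟨hpr, hk, hk2⟩ := generator_facts hodd r hr
  have hr1 : ‖(r : ℚ_[p])‖ = 1 := by
    rw [Padic.norm_intCast_eq_one_iff]
    exact ((Prime.coprime_iff_not_dvd (Nat.prime_iff_prime_int.1 hp.out)).2 hpr).symm
  have hr0 : (r : ℚ_[p]) ≠ 0 := by intro h; rw [h] at hr1; simp at hr1
  have hp1 : (1 : ℝ) < p := by exact_mod_cast hp.out.one_lt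
  have hp0 : (p : ℚ) ≠ 0 := by exact_mod_cast hp.out.ne_zero
  have hN : 0 < p * (p - 1) := Nat.mul_pos hp.out.pos (Nat.sub_pos_of_lt hp.out.one_lt)
  have hNcast : ((p * (p - 1) : ℕ) : ℤ) = (p : ℤ) * (p - 1) := by
    rw [Nat.cast_mul, Nat.cast_sub hp.out.one_le]; simp
  have hrN : ‖(r : ℚ_[p]) ^ (p * (p - 1)) - 1‖ = (p : ℝ)⁻¹ * (p : ℝ)⁻¹ := by
    have := norm_zpow_sub_one_of_dvd hodd r hpr ((hk _).2 dvd_rfl) hk2 p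
    rw [mul_comm, ← hNcast, zpow_natCast] at this
    rw [this]; simp
  have hu1 : ‖((u : ℚ) : ℚ_[p])‖ = 1 := by
    obtain ⟨w, rfl⟩ := hu
    have h1 := mem_ZLoc_iff.1 (w : ZLoc p).2
    have h2 := mem_ZLoc_iff.1 ((w⁻¹ : (ZLoc p)ˣ) : ZLoc p).2
    have h3 : (((w : ZLoc p) : ℚ) : ℚ_[p]) * ((((w⁻¹ : (ZLoc p)ˣ) : ZLoc p) : ℚ) : ℚ_[p]) = 1 := by
      exact_mod_cast congrArg (fun z : ZLoc p => ((z : ℚ) : ℚ_[p])) w.mul_inv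
    have h4 := congrArg norm h3
    rw [norm_mul, norm_one] at h4
    nlinarith [norm_nonneg (((w : ZLoc p) : ℚ) : ℚ_[p])]
  have hpN : ‖(p : ℚ_[p]) ^ (p * (p - 1)) - 1‖ = 1 := by
    have h1 : ‖(p : ℚ_[p]) ^ (p * (p - 1))‖ < 1 := by
      rw [norm_pow]; exact pow_lt_one₀ (norm_nonneg _) Padic.norm_p_lt_one hN.ne'
    rw [sub_eq_add_neg, Padic.add_eq_max_of_ne] <;> rw [norm_neg, norm_one]
    · exact max_eq_right h1.le
    · exact h1.ne
  have hDn : ‖(r : ℚ_[p]) ^ (1 + p * (p - 1)) - (r : ℚ_[p]) ^ m‖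
      = ‖(r : ℚ_[p]) ^ (p * (p - 1) + 1 - m : ℤ) - 1‖ := by
    have : (r : ℚ_[p]) ^ (1 + p * (p - 1)) - (r : ℚ_[p]) ^ m
        = (r : ℚ_[p]) ^ m * ((r : ℚ_[p]) ^ (p * (p - 1) + 1 - m : ℤ) - 1) := by
      rw [mul_sub, ← zpow_add₀ hr0, ← zpow_natCast, Nat.cast_add, hNcast, mul_one]
      congr 2
      push_cast; ring
    rw [this, norm_mul, norm_zpow, hr1, one_zpow, one_mul]
  have hXn : ‖(r : ℚ_[p]) - (r : ℚ_[p]) ^ m‖ = ‖(r : ℚ_[p]) ^ (m - 1) - 1‖ := by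
    have : (r : ℚ_[p]) - (r : ℚ_[p]) ^ m = - (r * ((r : ℚ_[p]) ^ (m - 1) - 1)) := by
      rw [mul_sub, ← zpow_one_add₀ hr0]; simp
    rw [this, norm_neg, norm_mul, hr1, one_mul]
  have hc : ‖(((u : ℚ) * ((p : ℚ) ^ (p * (p - 1)) - 1) : ℚ) : ℚ_[p])‖ = 1 := by
    push_cast; rw [norm_mul, hu1, hpN, one_mul]
  rw [← hDn] at hD h
  rw [← hXn, ← Padic.norm_p_pow (p * (p - 1)), ← norm_mul] at hF h
  -- the image of the fourth relation under the functional is `u * (F - D)`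
  have hT : ‖(((u : ℚ) * ((p : ℚ) ^ (p * (p - 1)) - 1) * ((r : ℚ) - (r : ℚ) ^ m)
      - p * (((u : ℚ) / p) * (r : ℚ) * ((r : ℚ) ^ (p * (p - 1)) - 1)) : ℚ) : ℚ_[p])‖
      = ‖(p : ℚ_[p]) ^ (p * (p - 1)) * ((r : ℚ_[p]) - (r : ℚ_[p]) ^ m)
        - ((r : ℚ_[p]) ^ (1 + p * (p - 1)) - (r : ℚ_[p]) ^ m)‖ := by
    have : ((u : ℚ) * ((p : ℚ) ^ (p * (p - 1)) - 1) * ((r : ℚ) - (r : ℚ) ^ m)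
      - p * (((u : ℚ) / p) * (r : ℚ) * ((r : ℚ) ^ (p * (p - 1)) - 1)) : ℚ)
      = u * ((p : ℚ) ^ (p * (p - 1)) * ((r : ℚ) - (r : ℚ) ^ m)
        - ((r : ℚ) ^ (1 + p * (p - 1)) - (r : ℚ) ^ m)) := by
      field_simp
      ring
    rw [this]
    push_cast
    rw [norm_mul, hu1, one_mul]
  have hrm : ‖(r : ℚ_[p]) ^ m‖ = 1 := by rw [norm_zpow, hr1, one_zpow]
  refine quot_equiv e _ _ hc (span_iff _ e _ _ _ _ hc ?_ ?_ ?_ he ?_ ?_ ?_)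
  · push_cast
    exact padic_norm_sub_le (by rw [norm_pow, hr1, one_pow]) hrm.le
  · push_cast
    exact padic_norm_sub_le hr1.le hrm.le
  · push_cast
    rw [norm_mul, norm_mul, norm_div, hu1, hr1, hrN, Padic.norm_p]
    have : (p : ℝ)⁻¹ ≤ 1 := inv_le_one_of_one_le₀ hp1.le
    have h3 : (p : ℝ) ≠ 0 := by positivity
    simpa [h3] using this
  · push_cast
    rw [norm_mul]
    exact (mul_le_of_le_one_left (norm_nonneg _) Padic.norm_p_lt_one.le).trans hD
  · rw [hT]; exact padic_norm_sub_le hF hD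
  · rw [hT]
    refine h.imp_left fun ⟨h1, h2⟩ => ?_
    rw [sub_eq_add_neg, Padic.add_eq_max_of_ne, norm_neg, h1, max_eq_right h2.le]
    rw [norm_neg, h1]; exact h2.ne

/-- Davis' Proposition 6.6c (case `ε = 1`, `n = 1`): even-degree `v₁`-periodic homotopy
groups of a space whose `K`-theory looks like an `S³`-bundle over `S^{3+2p(p-1)}`
with attaching map `α_p`. -/
theorem stmt7 (p : ℕ) [Fact p.Prime] (hodd : Odd p) (r : ℤ)
    (hr : ∀ v : (ZMod (p ^ 2))ˣ, ∃ j : ℕ, (v : ZMod (p ^ 2)) = (r : ZMod (p ^ 2)) ^ j)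
    (u : ZLoc p) (hu : IsUnit u) (m : ℤ) :
    (¬ ((p : ℤ) - 1 ∣ m - 1) →
      Subsingleton (QuotMod2 p
        {![0, (p : ℚ) ^ (1 + p * (p - 1))],
         ![(p : ℚ), (u : ℚ) * ((p : ℚ) ^ (p * (p - 1)) - 1)],
         ![0, (r : ℚ) ^ (1 + p * (p - 1)) - (r : ℚ) ^ m],
         ![(r : ℚ) - (r : ℚ) ^ m,
           ((u : ℚ) / p) * (r : ℚ) * ((r : ℚ) ^ (p * (p - 1)) - 1)]})) ∧
    (∀ i : ℤ, m = 1 + ((p : ℤ) - 1) * i → ∀ e : ℕ,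
      (e : ℕ∞) = min ((2 + p * (p - 1) : ℕ) : ℕ∞) (nuE p (i - p) + 1) →
      Nonempty ((QuotMod2 p
        {![0, (p : ℚ) ^ (1 + p * (p - 1))],
         ![(p : ℚ), (u : ℚ) * ((p : ℚ) ^ (p * (p - 1)) - 1)],
         ![0, (r : ℚ) ^ (1 + p * (p - 1)) - (r : ℚ) ^ m],
         ![(r : ℚ) - (r : ℚ) ^ m,
           ((u : ℚ) / p) * (r : ℚ) * ((r : ℚ) ^ (p * (p - 1)) - 1)]}) ≃+
        ZMod (p ^ e))) := by
  have hp : Fact p.Prime := inferInstance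
  obtain ⟨hpr, hk, hk2⟩ := generator_facts hodd r hr
  have hp1 : (1 : ℝ) < p := by exact_mod_cast hp.out.one_lt
  have hp0 : (p : ℝ) ≠ 0 := by positivity
  have hN : 0 < p * (p - 1) := Nat.mul_pos hp.out.pos (Nat.sub_pos_of_lt hp.out.one_lt)
  have hlt : ∀ {a b : ℤ}, a < b → (p : ℝ) ^ a < (p : ℝ) ^ b := fun h => zpow_lt_zpow_right₀ hp1 h
  have hle : ∀ {a b : ℤ}, a ≤ b → (p : ℝ) ^ a ≤ (p : ℝ) ^ b :=
    fun h => zpow_le_zpow_right₀ hp1.le h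
  constructor
  · intro hm
    have hD : ‖(r : ℚ_[p]) ^ (p * (p - 1) + 1 - m : ℤ) - 1‖ = 1 := by
      refine norm_zpow_sub_one_of_not_dvd r hpr hk _ fun hdvd => hm ?_
      rw [show m - 1 = p * (p - 1) - (p * (p - 1) + 1 - m) by ring]
      exact dvd_sub (dvd_mul_left ((p : ℤ) - 1) p) hdvd
    have hX : ‖(r : ℚ_[p]) ^ (m - 1) - 1‖ = 1 := norm_zpow_sub_one_of_not_dvd r hpr hk _ hm
    have hF : (p : ℝ) ^ (-(p * (p - 1) : ℕ) : ℤ) * ‖(r : ℚ_[p]) ^ (m - 1) - 1‖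
        < (p : ℝ) ^ (-(0 : ℕ) : ℤ) := by
      rw [hX, mul_one]
      exact hlt (by omega)
    obtain ⟨f⟩ := quot_equiv_of_norms hodd r hr u hu m 0 (Nat.zero_le _)
      (by simpa using hD.le) hF.le (Or.inl ⟨by simpa using hD, hF⟩)
    have : Subsingleton (ZMod (p ^ 0)) := by rw [pow_zero]; infer_instance
    exact f.toEquiv.subsingleton
  · rintro i rfl e he
    have hD : ‖(r : ℚ_[p]) ^ (p * (p - 1) + 1 - (1 + ((p : ℤ) - 1) * i) : ℤ) - 1‖
        = (p : ℝ)⁻¹ * ‖((i - p : ℤ) : ℚ_[p])‖ := by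
      have := norm_zpow_sub_one_of_dvd hodd r hpr ((hk _).2 dvd_rfl) hk2 (p - i)
      rw [show (p * (p - 1) + 1 - (1 + ((p : ℤ) - 1) * i) : ℤ) = (p - 1) * (p - i) by ring, this]
      push_cast
      rw [norm_sub_rev]
    have hX : ‖(r : ℚ_[p]) ^ (1 + ((p : ℤ) - 1) * i - 1) - 1‖ = (p : ℝ)⁻¹ * ‖(i : ℚ_[p])‖ := by
      rw [show 1 + ((p : ℤ) - 1) * i - 1 = (p - 1) * i by ring]
      exact norm_zpow_sub_one_of_dvd hodd r hpr ((hk _).2 dvd_rfl) hk2 i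
    have hF1 : (p : ℝ) ^ (-(p * (p - 1) : ℕ) : ℤ)
        * ‖(r : ℚ_[p]) ^ (1 + ((p : ℤ) - 1) * i - 1) - 1‖
        ≤ (p : ℝ) ^ (-(p * (p - 1) + 1 : ℕ) : ℤ) := by
      rw [hX, ← mul_assoc, ← zpow_sub_one₀ hp0]
      refine (mul_le_of_le_one_right (by positivity) (Padic.norm_int_le_one i)).trans
        (hle (by push_cast; omega))
    have hF2 : (p : ℤ) ∣ i → (p : ℝ) ^ (-(p * (p - 1) : ℕ) : ℤ)
        * ‖(r : ℚ_[p]) ^ (1 + ((p : ℤ) - 1) * i - 1) - 1‖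
        ≤ (p : ℝ) ^ (-(p * (p - 1) + 2 : ℕ) : ℤ) := by
      intro hi
      have hi' : ‖(i : ℚ_[p])‖ ≤ (p : ℝ) ^ (-(1 : ℕ) : ℤ) :=
        (Padic.norm_int_le_pow_iff_dvd i 1).2 (by simpa using hi)
      rw [hX, ← mul_assoc, ← zpow_sub_one₀ hp0]
      refine (mul_le_mul_of_nonneg_left hi' (by positivity)).trans ?_
      rw [← zpow_add₀ hp0]
      exact hle (by push_cast; omega)
    by_cases hk0 : i - p = 0
    · have he' : e = p * (p - 1) + 2 := by
        rw [nuE, if_pos hk0, top_add, min_eq_left le_top] at he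
        have : e = 2 + p * (p - 1) := by exact_mod_cast he
        omega
      subst he'
      refine quot_equiv_of_norms hodd r hr u hu _ _ le_rfl ?_ (hF2 ?_) (Or.inr rfl)
      · rw [hD, hk0]; simp; positivity
      · exact ⟨1, by linarith⟩
    · set ν := padicValInt p (i - p) with hν
      have he' : e = min (p * (p - 1) + 2) (ν + 1) := by
        rw [nuE, if_neg hk0] at he
        have : e = min (2 + p * (p - 1)) (ν + 1) := by
          apply Nat.cast_injective (R := ℕ∞)
          rw [he, (Nat.mono_cast (α := ℕ∞)).map_min, Nat.cast_add ν, Nat.cast_one]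
        rw [this, add_comm 2]
      have hDν : ‖(r : ℚ_[p]) ^ (p * (p - 1) + 1 - (1 + ((p : ℤ) - 1) * i) : ℤ) - 1‖
          = (p : ℝ) ^ (-(ν + 1 : ℕ) : ℤ) := by
        rw [hD, Padic.norm_eq_zpow_neg_valuation (by exact_mod_cast hk0),
          Padic.valuation_intCast, ← hν, mul_comm, ← zpow_sub_one₀ hp0]
        congr 1
        push_cast; ring
      have hpi : ν ≠ 0 → (p : ℤ) ∣ i := by
        intro h0
        have h1 : (p : ℤ) ∣ i - p := (dvd_pow_self _ h0).trans (padicValInt_dvd (i - p))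
        simpa using h1
      have heN : e ≤ p * (p - 1) + 2 := he' ▸ min_le_left _ _
      have heν : e ≤ ν + 1 := he' ▸ min_le_right _ _
      have hD' := hDν.le.trans (hle (b := -(e : ℤ)) (by omega))
      rcases eq_or_ne ν 0 with h0 | h0
      -- here `i` may be prime to `p`, so only the weaker bound on `F` holds, but `e = 1`
      · have he1 : e = 1 := by rw [he', h0]; omega
        subst he1
        have hF := hF1.trans_lt (hlt (b := -((1 : ℕ) : ℤ)) (by push_cast; omega))
        exact quot_equiv_of_norms hodd r hr u hu _ _ heN hD' hF.le
          (Or.inl ⟨by rw [hDν, h0], hF⟩)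
      · have hF := hF2 (hpi h0)
        refine quot_equiv_of_norms hodd r hr u hu _ _ heN hD'
          (hF.trans (hle (by omega))) ?_
        rcases eq_or_lt_of_le heN with h1 | h1
        · exact Or.inr h1
        · have : e = ν + 1 := by omega
          exact Or.inl ⟨by rw [hDν, this], hF.trans_lt (hlt (by omega))⟩

end
end
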